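/- arXiv:1810.09287 — 6 statements merged into one kernel-verified Lean document; each statement's English description precedes it below -/
import Mathlib

section
/- Let A = (A,Q,δ,I,F) be an NFA over an alphabet A and let P = (τ: 𝔼* → T, G) be a tagging compatible with A, of size n = |T|. Then there exists a monoid morphism α: (A ∪ 𝔼)* → M into a finite monoid M which recognizes the language L[A,P] and satisfies |M| ≤ n + |A| · n² · (|Q|² + 2). -/
/-! Infrastructure: NFAs with an explicit finite set of transitions, taggings over the
two-letter alphabet `𝔼 = Bool`, the relabeled NFA `A[P]`, the languages `K[A,P]` and
`L[A,P]`, and recognition of a language by a monoid morphism. The disjoint union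
`A ∪ 𝔼` is modelled as the sum type `A ⊕ Bool`. -/

/-- A nondeterministic finite automaton with a finite set `trans` of transitions. -/
structure NFA' (A Q : Type) where
  trans : Finset (Q × A × Q)
  start : Finset Q
  accept : Finset Q

namespace NFA'

variable {A Q T : Type}

/-- `Path M q w r` : the word `w` labels a run from state `q` to state `r`. -/
inductive Path (M : NFA' A Q) : Q → List A → Q → Prop
  | nil (q : Q) : Path M q [] q
  | cons {q r s : Q} {a : A} {w : List A} :
      (q, a, r) ∈ M.trans → Path M r w s → Path M q (a :: w) s

/-- The language recognized by an NFA. -/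
def lang (M : NFA' A Q) : Language A :=
  {w | ∃ q ∈ M.start, ∃ r ∈ M.accept, M.Path q w r}

/-- The NFA `A[P]`: each transition gets relabeled by a distinct letter of `A × T`;
the choice of distinct tags for the transitions (coming from the fixed linear orders on
`δ` and `G`) is recorded by the injection `ι`. -/
def relabel [DecidableEq Q] [DecidableEq A] [DecidableEq T]
    (M : NFA' A Q) (ι : {x // x ∈ M.trans} → T) : NFA' (A × T) Q where
  trans := M.trans.attach.image (fun x => (x.1.1, (x.1.2.1, ι x), x.1.2.2))
  start := M.start
  accept := M.accept

end NFA'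

/-- A morphism `α : A* → M` recognizes `L` when `L = α⁻¹(F)` for some `F ⊆ M`. -/
def Recognizes {A M : Type} [Monoid M] (α : FreeMonoid A →* M) (L : Language A) : Prop :=
  ∃ F : Set M, L = {w : List A | α (FreeMonoid.ofList w) ∈ F}

/-- The language `K[A,P] ⊆ (A × T)*` recognized by the relabeled NFA `A[P]`. -/
def KAP {A Q T : Type} [DecidableEq Q] [DecidableEq A] [DecidableEq T]
    (M : NFA' A Q) (ι : {x // x ∈ M.trans} → T) : Language (A × T) :=
  (M.relabel ι).lang

/-- The language `L[A,P] = 𝔼* · μ⁻¹(K[A,P]) ⊆ (A ∪ 𝔼)*`, where a word of `(A𝔼*)*` is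
(uniquely) decomposed as `a₁w₁ ⋯ aₘwₘ` (`aⱼ ∈ A`, `wⱼ ∈ 𝔼*`) and
`μ(a₁w₁ ⋯ aₘwₘ) = (a₁,τ(w₁)) ⋯ (aₘ,τ(wₘ))`. -/
def LAP {A Q T : Type} [DecidableEq Q] [DecidableEq A] [DecidableEq T] [Monoid T]
    (M : NFA' A Q) (τ : FreeMonoid Bool →* T) (ι : {x // x ∈ M.trans} → T) :
    Language (A ⊕ Bool) :=
  {w | ∃ (w₀ : List Bool) (l : List (A × List Bool)),
      w = w₀.map Sum.inr ++ (l.map (fun p => Sum.inl p.1 :: p.2.map Sum.inr)).flatten ∧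
      (l.map (fun p => (p.1, τ (FreeMonoid.ofList p.2)))) ∈ KAP M ι}

/-! Distinct transitions of the automaton carry distinct tags, so a letter of `A × T` labels at
most one transition of `A[P]`: as a relation on states it is empty or a single pair. Relations with
at most one pair are closed under composition, so every nonempty word also acts as such a relation,
and `K[A,P]` is recognized by a monoid `S` with at most `|Q|² + 2` elements.

To read a word `w₀a₁w₁⋯aₘwₘ` one remembers `τ(w₀)`, the last letter `aₘ`, the tag `τ(wₘ)` and the
value in `S` of `(a₁,τ(w₁))⋯(aₘ₋₁,τ(wₘ₋₁))`. The last block has to be kept apart because `τ(wₘ)`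
still changes when letters of `𝔼` follow; it is absorbed into `S` once the next letter of `A` is
met. -/

/-- The monoid of relations on `Q` that are the identity or contain at most one pair, under
composition. For `|Q| ≥ 2` it is the Brandt semigroup of matrix units and zero with an identity
adjoined. -/
def BrandtMonoid (Q : Type*) : Type _ :=
  {R : SetRel Q Q // R = SetRel.id ∨ R.Subsingleton}

namespace BrandtMonoid

variable {Q : Type*}

theorem subsingleton_comp {R S : SetRel Q Q} (hR : R.Subsingleton) (hS : S.Subsingleton) :
    (R.comp S).Subsingleton := by
  rintro ⟨p, r⟩ ⟨q, hpq, hqr⟩ ⟨p', r'⟩ ⟨q', hpq', hqr'⟩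
  exact Prod.ext (Prod.ext_iff.mp (hR hpq hpq')).1 (Prod.ext_iff.mp (hS hqr hqr')).2

theorem comp_eq_id_or_subsingleton {R S : SetRel Q Q}
    (hR : R = SetRel.id ∨ R.Subsingleton) (hS : S = SetRel.id ∨ S.Subsingleton) :
    R.comp S = SetRel.id ∨ (R.comp S).Subsingleton := by
  rcases hR with rfl | hR
  · rwa [SetRel.id_comp]
  rcases hS with rfl | hS
  · rw [SetRel.comp_id]
    exact .inr hR
  · exact .inr (subsingleton_comp hR hS)

instance : Monoid (BrandtMonoid Q) where
  one := ⟨SetRel.id, .inl rfl⟩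
  mul x y := ⟨x.1.comp y.1, comp_eq_id_or_subsingleton x.2 y.2⟩
  mul_assoc x y z := Subtype.ext (SetRel.comp_assoc x.1 y.1 z.1)
  one_mul x := Subtype.ext (SetRel.id_comp x.1)
  mul_one x := Subtype.ext (SetRel.comp_id x.1)

theorem mem_one {q r : Q} : (q, r) ∈ (1 : BrandtMonoid Q).1 ↔ q = r := .rfl

theorem mem_mul {x y : BrandtMonoid Q} {q s : Q} :
    (q, s) ∈ (x * y).1 ↔ ∃ r, (q, r) ∈ x.1 ∧ (r, s) ∈ y.1 := .rfl

instance [Finite Q] : Finite (BrandtMonoid Q) :=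
  inferInstanceAs (Finite {R : SetRel Q Q // R = SetRel.id ∨ R.Subsingleton})

theorem card_le (Q : Type*) : Nat.card (BrandtMonoid Q) ≤ Nat.card Q ^ 2 + 2 := by
  have hset : {R : SetRel Q Q | R = SetRel.id ∨ R.Subsingleton} =
      insert SetRel.id (insert ∅ (Set.range singleton)) := by
    ext R
    simp only [Set.mem_ofPred_eq, Set.mem_insert_iff, Set.mem_range,
      Set.subsingleton_iff_eq_empty_or_singleton, eq_comm]
  have hsingletons : (Set.range (singleton : Q × Q → SetRel Q Q)).ncard = Nat.card Q ^ 2 := by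
    rw [← Set.image_univ, Set.ncard_image_of_injective _ Set.singleton_injective, Set.ncard_univ,
      Nat.card_prod, sq]
  calc Nat.card (BrandtMonoid Q)
      = (insert SetRel.id (insert ∅ (Set.range (singleton : Q × Q → SetRel Q Q)))).ncard := by
        rw [← hset]; rfl
    _ ≤ (insert ∅ (Set.range (singleton : Q × Q → SetRel Q Q))).ncard + 1 := Set.ncard_insert_le ..
    _ ≤ (Set.range (singleton : Q × Q → SetRel Q Q)).ncard + 1 + 1 := by
        gcongr; exact Set.ncard_insert_le ..
    _ = Nat.card Q ^ 2 + 2 := by rw [hsingletons]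

end BrandtMonoid

namespace NFA'

variable {B Q : Type}

/-- The relation on the states of `N` formed by the transitions labeled `b`. -/
def letterRel (N : NFA' B Q) (b : B) : SetRel Q Q :=
  {p | (p.1, b, p.2) ∈ N.trans}

/-- The action of letters on states, for an automaton in which each letter labels at most one
transition. Its extension to words recognizes the language of the automaton. -/
def brandtLetter (N : NFA' B Q) (h : ∀ b, (N.letterRel b).Subsingleton) (b : B) :
    BrandtMonoid Q :=
  ⟨N.letterRel b, .inr (h b)⟩

theorem path_iff_mem_lift_brandtLetter {N : NFA' B Q} (h : ∀ b, (N.letterRel b).Subsingleton)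
    {w : List B} {q s : Q} :
    N.Path q w s ↔ (q, s) ∈ (FreeMonoid.lift (N.brandtLetter h) (FreeMonoid.ofList w)).1 := by
  induction w generalizing q with
  | nil =>
    rw [FreeMonoid.ofList_nil, map_one, BrandtMonoid.mem_one]
    constructor
    · rintro ⟨⟩
      rfl
    · rintro rfl
      exact .nil q
  | cons b w ih =>
    rw [FreeMonoid.ofList_cons, map_mul, FreeMonoid.lift_eval_of, BrandtMonoid.mem_mul]
    constructor
    · rintro (_ | ⟨hqr, hrs⟩)
      exact ⟨_, hqr, ih.mp hrs⟩
    · rintro ⟨r, hqr, hrs⟩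
      exact .cons hqr (ih.mpr hrs)

theorem recognizes_lang {N : NFA' B Q} (h : ∀ b, (N.letterRel b).Subsingleton) :
    Recognizes (FreeMonoid.lift (N.brandtLetter h)) N.lang := by
  refine ⟨{x | ∃ q ∈ N.start, ∃ r ∈ N.accept, (q, r) ∈ x.1}, ?_⟩
  ext w
  change (∃ q ∈ N.start, ∃ r ∈ N.accept, N.Path q w r) ↔ _
  simp only [path_iff_mem_lift_brandtLetter h]
  rfl

theorem subsingleton_letterRel_relabel {A T : Type} [DecidableEq Q] [DecidableEq A]
    [DecidableEq T] (N : NFA' A Q) {ι : {x // x ∈ N.trans} → T} (hι : Function.Injective ι)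
    (p : A × T) : ((N.relabel ι).letterRel p).Subsingleton := by
  have exists_transition : ∀ e ∈ (N.relabel ι).letterRel p,
      ∃ x, ι x = p.2 ∧ e = (x.1.1, x.1.2.2) := by
    rintro ⟨q, r⟩ he
    obtain ⟨x, -, hx⟩ := Finset.mem_image.mp he
    cases hx
    exact ⟨x, rfl, rfl⟩
  intro e he e' he'
  obtain ⟨x, hx, rfl⟩ := exists_transition e he
  obtain ⟨x', hx', rfl⟩ := exists_transition e' he'
  rw [hι (hx.trans hx'.symm)]

end NFA'

section TaggedWords

variable {A E T : Type*}

/-- The word `w₀a₁w₁⋯aₘwₘ` over `A ∪ E`, given by `w₀` and the list of blocks `(aⱼ, wⱼ)`. -/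
def interleave (w₀ : List E) (l : List (A × List E)) : List (A ⊕ E) :=
  w₀.map Sum.inr ++ (l.map fun p => Sum.inl p.1 :: p.2.map Sum.inr).flatten

theorem interleave_concat (w₀ : List E) (l : List (A × List E)) (a : A) (w : List E) :
    interleave w₀ (l ++ [(a, w)]) = interleave w₀ l ++ Sum.inl a :: w.map Sum.inr := by
  simp [interleave]

theorem exists_eq_interleave (w : List (A ⊕ E)) : ∃ w₀ l, w = interleave w₀ l := by
  induction w with
  | nil => exact ⟨[], [], rfl⟩
  | cons c w ih =>
    obtain ⟨w₀, l, rfl⟩ := ih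
    rcases c with a | e
    · exact ⟨[], (a, w₀) :: l, rfl⟩
    · exact ⟨e :: w₀, l, rfl⟩

variable [Monoid T]

/-- The map `μ`, on a word of `(AE*)*` given by its list of blocks `(aⱼ, wⱼ)`. -/
def tagBlocks (τ : FreeMonoid E →* T) (l : List (A × List E)) : List (A × T) :=
  l.map fun p => (p.1, τ (FreeMonoid.ofList p.2))

theorem tagBlocks_concat (τ : FreeMonoid E →* T) (l : List (A × List E)) (a : A) (w : List E) :
    tagBlocks τ (l ++ [(a, w)]) = tagBlocks τ l ++ [(a, τ (FreeMonoid.ofList w))] := by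
  simp [tagBlocks]

/-- The language `E* · μ⁻¹(K)`. -/
def tagPreimage (τ : FreeMonoid E →* T) (K : Language (A × T)) : Language (A ⊕ E) :=
  {w | ∃ w₀ l, w = interleave w₀ l ∧ tagBlocks τ l ∈ K}

end TaggedWords

/-- The monoid that recognizes `E* · μ⁻¹(K)` when `f`, extended to words, recognizes `K`. A word
`w₀` without letters of `A` is recorded by `tag (τ w₀)`, and `w₀a₁w₁⋯aₘwₘ` with `m ≥ 1` by
`block (τ w₀) (f (a₁, τ w₁) ⋯ f (aₘ₋₁, τ wₘ₋₁)) aₘ (τ wₘ)`. The type does not mention `f`, but its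
multiplication does. -/
inductive BlockMonoid {A T S : Type*} (f : A × T → S)
  | tag (t : T)
  | block (s : T) (m : S) (a : A) (t : T)

namespace BlockMonoid

variable {A E T S : Type*}

section Card

variable (f : A × T → S)

/-- `BlockMonoid f` as a sum of products, which gives its finiteness and cardinality. -/
def equivSum : BlockMonoid f ≃ T ⊕ T × S × A × T where
  toFun
    | tag t => .inl t
    | block s m a t => .inr (s, m, a, t)
  invFun
    | .inl t => tag t
    | .inr (s, m, a, t) => block s m a t
  left_inv x := by cases x <;> rfl
  right_inv x := by cases x <;> rfl

variable [Finite A] [Finite T] [Finite S]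

instance : Finite (BlockMonoid f) := .of_equiv _ (equivSum f).symm

theorem card_eq :
    Nat.card (BlockMonoid f) = Nat.card T + Nat.card A * Nat.card T ^ 2 * Nat.card S := by
  rw [Nat.card_congr (equivSum f), Nat.card_sum]
  simp only [Nat.card_prod]
  ring

end Card

variable [Monoid T] {f : A × T → S}

instance : One (BlockMonoid f) := ⟨tag 1⟩

theorem one_eq_tag : (1 : BlockMonoid f) = tag 1 := rfl

variable [Monoid S]

instance : Mul (BlockMonoid f) where
  mul
    | tag t, tag t' => tag (t * t')
    | tag t, block s m a t' => block (t * s) m a t'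
    | block s m a t, tag t' => block s m a (t * t')
    | block s m a t, block s' m' a' t' => block s (m * f (a, t * s') * m') a' t'

theorem tag_mul_tag (t t' : T) : (tag t * tag t' : BlockMonoid f) = tag (t * t') := rfl

theorem tag_mul_block (t s : T) (m : S) (a : A) (t' : T) :
    (tag t * block s m a t' : BlockMonoid f) = block (t * s) m a t' := rfl

theorem block_mul_tag (s : T) (m : S) (a : A) (t t' : T) :
    (block s m a t * tag t' : BlockMonoid f) = block s m a (t * t') := rfl

theorem block_mul_block (s : T) (m : S) (a : A) (t s' : T) (m' : S) (a' : A) (t' : T) :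
    (block s m a t * block s' m' a' t' : BlockMonoid f) =
      block s (m * f (a, t * s') * m') a' t' := rfl

instance : Monoid (BlockMonoid f) where
  mul_assoc x y z := by
    cases x <;> cases y <;> cases z <;>
      simp only [tag_mul_tag, tag_mul_block, block_mul_tag, block_mul_block, mul_assoc]
  one_mul x := by
    cases x <;> simp only [one_eq_tag, tag_mul_tag, tag_mul_block, one_mul]
  mul_one x := by
    cases x <;> simp only [one_eq_tag, tag_mul_tag, block_mul_tag, mul_one]

variable (f)

/-- The embedding of the tags into the block monoid. -/
def tagHom : T →* BlockMonoid f where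
  toFun := tag
  map_one' := rfl
  map_mul' _ _ := rfl

/-- The morphism that recognizes `E* · μ⁻¹(K)`. -/
def wordHom (τ : FreeMonoid E →* T) : FreeMonoid (A ⊕ E) →* BlockMonoid f :=
  FreeMonoid.lift (Sum.elim (fun a => block 1 1 a 1) fun e => tag (τ (FreeMonoid.of e)))

theorem wordHom_map_inr (τ : FreeMonoid E →* T) (w : List E) :
    wordHom f τ (FreeMonoid.ofList (w.map Sum.inr)) = tag (τ (FreeMonoid.ofList w)) := by
  have hcomp : (wordHom f τ).comp (FreeMonoid.map Sum.inr) = (tagHom f).comp τ :=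
    FreeMonoid.hom_eq fun _ => rfl
  exact DFunLike.congr_fun hcomp (FreeMonoid.ofList w)

theorem wordHom_block (τ : FreeMonoid E →* T) (a : A) (w : List E) :
    wordHom f τ (FreeMonoid.ofList (Sum.inl a :: w.map Sum.inr)) =
      block 1 1 a (τ (FreeMonoid.ofList w)) := by
  rw [FreeMonoid.ofList_cons, map_mul, wordHom_map_inr, wordHom, FreeMonoid.lift_eval_of,
    Sum.elim_inl, block_mul_tag, one_mul]

variable {f}

/-- The value in `S` of `(a₁, τ w₁)⋯(aₘ, τ wₘ)`, read off from the record of `w₀a₁w₁⋯aₘwₘ`. -/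
def value : BlockMonoid f → S
  | tag _ => 1
  | block _ m a t => m * f (a, t)

theorem value_mul_block (x : BlockMonoid f) (a : A) (t : T) :
    value (x * block 1 1 a t) = value x * f (a, t) := by
  cases x with
  | tag s => rw [tag_mul_block, value, value]
  | block s m a' t' => rw [block_mul_block, value, value, mul_one, mul_one]

theorem value_wordHom_interleave (τ : FreeMonoid E →* T) (w₀ : List E) (l : List (A × List E)) :
    value (wordHom f τ (FreeMonoid.ofList (interleave w₀ l))) =
      FreeMonoid.lift f (FreeMonoid.ofList (tagBlocks τ l)) := by
  induction l using List.reverseRecOn with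
  | nil =>
    simp only [interleave, List.map_nil, List.flatten_nil, List.append_nil, wordHom_map_inr]
    rfl
  | append_singleton l p ih =>
    obtain ⟨a, w⟩ := p
    rw [interleave_concat, FreeMonoid.ofList_append, map_mul, wordHom_block, value_mul_block, ih,
      tagBlocks_concat, FreeMonoid.ofList_append, map_mul, FreeMonoid.ofList_singleton,
      FreeMonoid.lift_eval_of]

end BlockMonoid

theorem Recognizes.tagPreimage {A E T S : Type} [Monoid T] [Monoid S] {f : A × T → S}
    {K : Language (A × T)} (hK : Recognizes (FreeMonoid.lift f) K) (τ : FreeMonoid E →* T) :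
    Recognizes (BlockMonoid.wordHom f τ) (tagPreimage τ K) := by
  obtain ⟨F, rfl⟩ := hK
  have hvalue (w₀ : List E) (l : List (A × List E)) :
      (BlockMonoid.wordHom f τ (FreeMonoid.ofList (interleave w₀ l))).value ∈ F ↔
        FreeMonoid.lift f (FreeMonoid.ofList (tagBlocks τ l)) ∈ F := by
    rw [BlockMonoid.value_wordHom_interleave]
  refine ⟨{x | x.value ∈ F}, Set.ext fun w => ?_⟩
  constructor
  · rintro ⟨w₀, l, rfl, hl⟩
    exact (hvalue w₀ l).mpr hl
  · intro hw
    obtain ⟨w₀, l, rfl⟩ := exists_eq_interleave w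
    exact ⟨w₀, l, rfl, (hvalue w₀ l).mp hw⟩

theorem LAP_eq_tagPreimage {A Q T : Type} [DecidableEq Q] [DecidableEq A] [DecidableEq T]
    [Monoid T] (N : NFA' A Q) (τ : FreeMonoid Bool →* T) (ι : {x // x ∈ N.trans} → T) :
    LAP N τ ι = tagPreimage τ (KAP N ι) := rfl

theorem statement0 {A Q T : Type} [Fintype A] [DecidableEq A] [Fintype Q] [DecidableEq Q]
    [Monoid T] [Fintype T] [DecidableEq T]
    (τ : FreeMonoid Bool →* T) (G : Finset T)
    (N : NFA' A Q) (hcompat : N.trans.card ≤ G.card)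
    (ι : {x // x ∈ N.trans} → T) (hι : Function.Injective ι) (hιG : ∀ x, ι x ∈ G) :
    ∃ (M : Type) (_ : Monoid M) (_ : Fintype M) (α : FreeMonoid (A ⊕ Bool) →* M),
      Recognizes α (LAP N τ ι) ∧
      Fintype.card M ≤
        Fintype.card T +
          Fintype.card A * (Fintype.card T) ^ 2 * ((Fintype.card Q) ^ 2 + 2) := by
  have hsub := N.subsingleton_letterRel_relabel hι
  let f := (N.relabel ι).brandtLetter hsub
  have hK : Recognizes (FreeMonoid.lift f) (KAP N ι) := NFA'.recognizes_lang hsub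
  refine ⟨BlockMonoid f, inferInstance, Fintype.ofFinite _, BlockMonoid.wordHom f τ,
    LAP_eq_tagPreimage N τ ι ▸ hK.tagPreimage τ, ?_⟩
  simp only [← Nat.card_eq_fintype_card]
  rw [BlockMonoid.card_eq]
  gcongr
  exact BrandtMonoid.card_le Q
end

section
/- Let A = (A,Q,δ,I,F) be an NFA over an alphabet A and let P = (τ: 𝔼* → T, G) be a tagging compatible with A. Then the language K[A,P] ⊆ (A×T)* is recognized by a monoid morphism β: (A×T)* → N into a finite monoid N with |N| ≤ |Q|² + 2. -/
/-!
The transition monoid of an NFA recognizes its language. When distinct transitions carry distinct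
letters, a nonempty word determines both ends of every run it labels: its first letter fixes the
first transition and its last letter the last one. The transition relation of such a word is
therefore empty or a single pair of states, and with the identity of the empty word this leaves at
most `1 + |Q|² + 1` relations. The injectivity of the tags puts `A[P]` in this situation.
-/

theorem ncard_setOf_subsingleton_le (α : Type*) [Finite α] :
    {s : Set α | s.Subsingleton}.ncard ≤ Nat.card α + 1 := by
  have empty_or_singleton : {s : Set α | s.Subsingleton} = insert ∅ (Set.range singleton) := by
    ext s
    simp only [Set.mem_ofPred_eq, Set.subsingleton_iff_eq_empty_or_singleton, Set.mem_insert_iff,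
      Set.mem_range, eq_comm]
  calc {s : Set α | s.Subsingleton}.ncard
      ≤ (Set.range (singleton : α → Set α)).ncard + 1 :=
        empty_or_singleton ▸ Set.ncard_insert_le _ _
    _ = Nat.card α + 1 := by
        rw [← Nat.card_coe_set_eq, Nat.card_range_of_injective Set.singleton_injective]

namespace NFA'

open scoped SetRel

variable {A Q T : Type}

theorem path_nil_iff {M : NFA' A Q} {q r : Q} : M.Path q [] r ↔ q = r where
  mp | .nil _ => rfl
  mpr := by rintro rfl; exact .nil q

theorem path_cons_iff {M : NFA' A Q} {q s : Q} {a : A} {w : List A} :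
    M.Path q (a :: w) s ↔ ∃ r, (q, a, r) ∈ M.trans ∧ M.Path r w s where
  mp | .cons h p => ⟨_, h, p⟩
  mpr := fun ⟨_, h, p⟩ => .cons h p

theorem path_append_iff {M : NFA' A Q} {q s : Q} {u v : List A} :
    M.Path q (u ++ v) s ↔ ∃ r, M.Path q u r ∧ M.Path r v s := by
  induction u generalizing q with
  | nil => simp only [List.nil_append, path_nil_iff, exists_eq_left']
  | cons a u ih =>
    simp only [List.cons_append, path_cons_iff, ih]
    tauto

/-- The transition relation of the word `w`: the pairs `(q, r)` such that `w` labels a run from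
`q` to `r`. -/
def transitionRel (M : NFA' A Q) (w : List A) : SetRel Q Q :=
  {p | M.Path p.1 w p.2}

theorem transitionRel_nil (M : NFA' A Q) : M.transitionRel [] = SetRel.id :=
  Set.ext fun _ => path_nil_iff

theorem transitionRel_append (M : NFA' A Q) (u v : List A) :
    M.transitionRel (u ++ v) = M.transitionRel u ○ M.transitionRel v :=
  Set.ext fun _ => path_append_iff

/-- The transition morphism of an NFA. A word acts on sets of states by taking preimages under its
transition relation: with preimages rather than images, concatenation of words becomes composition
of functions in the same order. -/
def transitionHom (M : NFA' A Q) : FreeMonoid A →* Function.End (Set Q) where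
  toFun w := (M.transitionRel w.toList).preimage
  map_one' := by
    funext S
    rw [FreeMonoid.toList_one, transitionRel_nil, SetRel.preimage_id]
    rfl
  map_mul' u v := by
    funext S
    rw [FreeMonoid.toList_mul, transitionRel_append, SetRel.preimage_comp]
    rfl

/-- The transition monoid of an NFA: the actions of all words on sets of states. -/
abbrev transitionMonoid (M : NFA' A Q) : Submonoid (Function.End (Set Q)) :=
  MonoidHom.mrange M.transitionHom

instance [Finite Q] (M : NFA' A Q) : Finite M.transitionMonoid :=
  have : Finite (Function.End (Set Q)) := inferInstanceAs (Finite (Set Q → Set Q))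
  inferInstance

theorem recognizes_lang_transitionMonoid (M : NFA' A Q) :
    Recognizes M.transitionHom.mrangeRestrict M.lang :=
  ⟨{f | ∃ q ∈ M.start, q ∈ f.1 M.accept}, rfl⟩

/-- An NFA has distinct labels when its transitions are labeled by pairwise distinct letters. -/
def HasDistinctLabels (M : NFA' A Q) : Prop :=
  Set.InjOn (fun t : Q × A × Q => t.2.1) M.trans

theorem hasDistinctLabels_relabel [DecidableEq Q] [DecidableEq A] [DecidableEq T] (M : NFA' A Q)
    {ι : {x // x ∈ M.trans} → T} (hι : Function.Injective ι) :
    (M.relabel ι).HasDistinctLabels := by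
  intro t ht t' ht' label_eq
  obtain ⟨x, -, rfl⟩ := Finset.mem_image.mp ht
  obtain ⟨y, -, rfl⟩ := Finset.mem_image.mp ht'
  have tag_eq : ι x = ι y := congrArg Prod.snd label_eq
  rw [hι tag_eq]

namespace HasDistinctLabels

variable {M : NFA' A Q}

theorem path_ends_eq (hM : M.HasDistinctLabels) {w : List A} (hw : w ≠ []) {q r q' r' : Q}
    (p : M.Path q w r) (p' : M.Path q' w r') : q = q' ∧ r = r' := by
  induction p generalizing q' with
  | nil => exact absurd rfl hw
  | @cons q s r a w h p ih =>
    obtain ⟨s', h', p'⟩ := path_cons_iff.mp p'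
    obtain ⟨rfl, rfl⟩ : q = q' ∧ s = s' := by
      simpa only [Prod.mk.injEq, true_and] using hM h h' rfl
    refine ⟨rfl, ?_⟩
    rcases eq_or_ne w [] with rfl | hw
    · exact (path_nil_iff.mp p).symm.trans (path_nil_iff.mp p')
    · exact (ih hw p').2

theorem subsingleton_transitionRel (hM : M.HasDistinctLabels) {w : List A} (hw : w ≠ []) :
    (M.transitionRel w).Subsingleton :=
  fun _ hp _ hp' => Prod.ext_iff.mpr (hM.path_ends_eq hw hp hp')

theorem range_transitionRel_subset (hM : M.HasDistinctLabels) :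
    Set.range M.transitionRel ⊆ insert SetRel.id {R | R.Subsingleton} := by
  rintro _ ⟨w, rfl⟩
  rcases eq_or_ne w [] with rfl | hw
  · exact .inl M.transitionRel_nil
  · exact .inr (hM.subsingleton_transitionRel hw)

theorem card_transitionMonoid_le [Finite Q] (hM : M.HasDistinctLabels) :
    Nat.card M.transitionMonoid ≤ Nat.card Q ^ 2 + 2 := by
  have range_eq : (M.transitionMonoid : Set (Function.End (Set Q))) =
      SetRel.preimage '' Set.range M.transitionRel := by
    rw [MonoidHom.coe_mrange, ← Set.range_comp]
    rfl
  calc Nat.card M.transitionMonoid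
      = (SetRel.preimage '' Set.range M.transitionRel).ncard := by
        rw [← range_eq]
        exact Nat.card_coe_set_eq _
    _ ≤ (Set.range M.transitionRel).ncard := Set.ncard_image_le
    _ ≤ (insert SetRel.id {R : SetRel Q Q | R.Subsingleton}).ncard :=
        Set.ncard_le_ncard hM.range_transitionRel_subset
    _ ≤ {R : SetRel Q Q | R.Subsingleton}.ncard + 1 := Set.ncard_insert_le _ _
    _ ≤ Nat.card (Q × Q) + 1 + 1 := Nat.add_le_add_right (ncard_setOf_subsingleton_le _) 1
    _ = Nat.card Q ^ 2 + 2 := by rw [Nat.card_prod, sq]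

end HasDistinctLabels

end NFA'

theorem statement1_general {A Q : Type} [Fintype Q] (M : NFA' A Q) (hM : M.HasDistinctLabels) :
    ∃ (Nm : Type) (_ : Monoid Nm) (_ : Fintype Nm) (β : FreeMonoid A →* Nm),
      Recognizes β M.lang ∧ Fintype.card Nm ≤ (Fintype.card Q) ^ 2 + 2 := by
  refine ⟨M.transitionMonoid, inferInstance, Fintype.ofFinite _, M.transitionHom.mrangeRestrict,
    M.recognizes_lang_transitionMonoid, ?_⟩
  simpa only [← Nat.card_eq_fintype_card] using hM.card_transitionMonoid_le

theorem statement1 {A Q T : Type} [Fintype A] [DecidableEq A] [Fintype Q] [DecidableEq Q]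
    [Monoid T] [Fintype T] [DecidableEq T]
    (τ : FreeMonoid Bool →* T) (G : Finset T)
    (N : NFA' A Q) (hcompat : N.trans.card ≤ G.card)
    (ι : {x // x ∈ N.trans} → T) (hι : Function.Injective ι) (hιG : ∀ x, ι x ∈ G) :
    ∃ (Nm : Type) (_ : Monoid Nm) (_ : Fintype Nm) (β : FreeMonoid (A × T) →* Nm),
      Recognizes β (KAP N ι) ∧ Fintype.card Nm ≤ (Fintype.card Q) ^ 2 + 2 :=
  statement1_general (N.relabel ι) (N.hasDistinctLabels_relabel hι)
end

section
/- Let C and D be quotienting lattices of regular languages such that D extends C. Let A₁ and A₂ be two NFAs over an alphabet A, and let P be a tagging compatible with both A₁ and A₂ which fools D. Then L(A₁) is C(A)-separable from L(A₂) if and only if L[A₁,P] is D(A ∪ 𝔼)-separable from L[A₂,P]. -/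
/-! Infrastructure: classes of languages (one set of languages for every finite
alphabet, alphabets being modelled as types), quotienting lattices, Boolean and
polynomial closure, separation, regular languages, recognition by monoid morphisms,
and the notions of extension and fooling tagging from the paper. The fixed two-letter
alphabet `𝔼 = {0,1}` is modelled as `Bool`, and the disjoint union `A ∪ 𝔼` as the sum
type `A ⊕ Bool`. On `Language A` (which is `Set (List A)`) we use the lattice
operations `≤, ⊓, ⊔, ⊥` for `⊆, ∩, ∪, ∅`. -/

/-- A class of languages: to every alphabet it associates a set of languages. -/
abbrev LangClass : Type 1 := ∀ A : Type, Set (Language A)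

/-- A language is regular when it is recognized by a DFA with finitely many states. -/
def IsRegularLang {A : Type} (L : Language A) : Prop :=
  ∃ (σ : Type) (_ : Fintype σ) (M : DFA A σ), M.accepts = L

/-- `C` is a lattice (of languages): each `C(A)` contains `∅` and `A*` and is closed
under finite union and finite intersection. -/
def IsLatticeClass (C : LangClass) : Prop :=
  ∀ (A : Type) [Fintype A], (⊥ : Language A) ∈ C A ∧ (⊤ : Language A) ∈ C A ∧
    ∀ K L : Language A, K ∈ C A → L ∈ C A → K ⊔ L ∈ C A ∧ K ⊓ L ∈ C A

/-- `C` is quotienting: closed under left and right quotients by words. -/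
def IsQuotienting (C : LangClass) : Prop :=
  ∀ (A : Type) [Fintype A], ∀ L ∈ C A, ∀ u : List A,
    {w : List A | u ++ w ∈ L} ∈ C A ∧ {w : List A | w ++ u ∈ L} ∈ C A

/-- `C` is closed under inverse images of monoid morphisms between free monoids. -/
def ClosedInvImage (C : LangClass) : Prop :=
  ∀ (A B : Type) [Fintype A] [Fintype B] (φ : FreeMonoid A →* FreeMonoid B),
    ∀ L ∈ C B, {w : List A | FreeMonoid.toList (φ (FreeMonoid.ofList w)) ∈ L} ∈ C A

/-- Boolean closure: the least set of languages containing `S` and closed under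
Boolean operations (union, intersection, complement). -/
inductive BoolClosure {A : Type} (S : Set (Language A)) : Language A → Prop
  | base {L : Language A} : L ∈ S → BoolClosure S L
  | compl {L : Language A} : BoolClosure S L → BoolClosure S Lᶜ
  | union {K L : Language A} : BoolClosure S K → BoolClosure S L → BoolClosure S (K ⊔ L)
  | inter {K L : Language A} : BoolClosure S K → BoolClosure S L → BoolClosure S (K ⊓ L)

/-- Polynomial closure: the least set of languages containing `S` and closed under
finite union and marked concatenation `K a L`. -/
inductive PolClosure {A : Type} (S : Set (Language A)) : Language A → Prop
  | base {L : Language A} : L ∈ S → PolClosure S L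
  | union {K L : Language A} : PolClosure S K → PolClosure S L → PolClosure S (K ⊔ L)
  | marked {K L : Language A} (a : A) :
      PolClosure S K → PolClosure S L → PolClosure S (K * {[a]} * L)

/-- Level `k/2` of the concatenation hierarchy of basis `C` (levels are counted in
half units: index `k` is level `k/2`, so `C[0] = C`, `C[n + 1/2] = Pol(C[n])` and
`C[n + 1] = Bool(C[n + 1/2])`). -/
def hlevel (C : LangClass) : ℕ → LangClass
  | 0 => C
  | k + 1 => fun A =>
      if k % 2 = 0 then {L | PolClosure (hlevel C k A) L}
      else {L | BoolClosure (hlevel C k A) L}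

/-- `L₁` is `𝒞`-separable from `L₂`: some `K ∈ 𝒞` includes `L₁` and is disjoint
from `L₂`. -/
def Separable {A : Type} (𝒞 : Set (Language A)) (L₁ L₂ : Language A) : Prop :=
  ∃ K ∈ 𝒞, L₁ ≤ K ∧ L₂ ⊓ K = ⊥

/-- `γ : (A ∪ 𝔼)* → A*`, the morphism erasing the letters of `𝔼`. -/
def eraseE {A : Type} (w : List (A ⊕ Bool)) : List A :=
  w.filterMap (fun x => Sum.elim some (fun _ => none) x)

/-- `λᵤ : A* → (A ∪ 𝔼)*`, the morphism defined by `λᵤ(a) = a · u`. -/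
def padWith {A : Type} (u : List Bool) (w : List A) : List (A ⊕ Bool) :=
  w.flatMap (fun a => Sum.inl a :: u.map Sum.inr)

/-- `D` is an extension of `C`. -/
def Extension (C D : LangClass) : Prop :=
  ∀ (A : Type) [Fintype A],
    (∀ K ∈ C A, {w : List (A ⊕ Bool) | eraseE w ∈ K} ∈ D (A ⊕ Bool)) ∧
    (∀ u : List Bool, ∀ K ∈ D (A ⊕ Bool), {w : List A | padWith u w ∈ K} ∈ C A)

/-- The tagging `P = (τ : 𝔼* → T, G)` fools the class `D`. -/
def Fools {T : Type} [Monoid T] (τ : FreeMonoid Bool →* T) (G : Finset T)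
    (D : LangClass) : Prop :=
  ∀ (A : Type) [Fintype A] (M : Type) [Monoid M] [Fintype M]
    (α : FreeMonoid (A ⊕ Bool) →* M),
    (∀ L : Language (A ⊕ Bool), Recognizes α L → BoolClosure (D (A ⊕ Bool)) L) →
    ∃ s : M, ∀ t ∈ G, ∃ w : List Bool,
      α (FreeMonoid.ofList (w.map Sum.inr)) = s ∧ τ (FreeMonoid.ofList w) = t


/-!
Erasing the letters of `𝔼` maps `L[N,P]` into `L(N)`, so `γ⁻¹` of a separator in `C(A)` is a
separator in `D(A ∪ 𝔼)`. Conversely, let `K ∈ D(A ∪ 𝔼)` be a separator. All languages recognized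
by the syntactic morphism of `K` are Boolean combinations of the finitely many two-sided quotients
of `K`, so the tagging fools this morphism: there is `u ∈ 𝔼*` such that each tag `t ∈ G` is the
image under `τ` of a word syntactically equivalent to `u`. Hence every word `w = a₁⋯aₘ` of `L(N)`
can be tagged along a run into a word of `L[N,P]` that `K` does not distinguish from `λ_u(w) =
a₁u⋯aₘu`, and `λ_u⁻¹(K)` is a separator in `C(A)`.
-/

section Atoms

variable {X : Type*}

/-- The atom of `x` in the field of sets generated by `𝒬`: the points lying in the same members of
`𝒬` as `x`. -/
def atomOf (𝒬 : Set (Set X)) (x : X) : Set X :=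
  {y | ∀ Q ∈ 𝒬, y ∈ Q ↔ x ∈ Q}

theorem mem_atomOf_self (𝒬 : Set (Set X)) (x : X) : x ∈ atomOf 𝒬 x :=
  fun _ _ => Iff.rfl

theorem atomOf_eq_atomOf_iff {𝒬 : Set (Set X)} {x y : X} :
    atomOf 𝒬 x = atomOf 𝒬 y ↔ x ∈ atomOf 𝒬 y := by
  refine ⟨fun h => h ▸ mem_atomOf_self 𝒬 x, fun h => ?_⟩
  ext z
  exact forall₂_congr fun Q hQ => by rw [h Q hQ]

theorem finite_range_atomOf {𝒬 : Set (Set X)} (h𝒬 : 𝒬.Finite) : (Set.range (atomOf 𝒬)).Finite := by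
  refine (h𝒬.powerset.image fun 𝒮 => {y | ∀ Q ∈ 𝒬, y ∈ Q ↔ Q ∈ 𝒮}).subset ?_
  rintro _ ⟨x, rfl⟩
  refine ⟨{Q ∈ 𝒬 | x ∈ Q}, Set.sep_subset 𝒬 _, ?_⟩
  ext y
  exact forall₂_congr fun Q hQ => by simp only [Set.mem_sep_iff, hQ, true_and]

theorem atomOf_mem_booleanSubalgebra {B : BooleanSubalgebra (Set X)} {𝒬 : Set (Set X)}
    (h𝒬 : 𝒬.Finite) (h𝒬B : 𝒬 ⊆ B) (x : X) : atomOf 𝒬 x ∈ B := by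
  have atomOf_eq : atomOf 𝒬 x = ⨅ Q ∈ 𝒬, {y | y ∈ Q ↔ x ∈ Q} := by
    ext y
    simp only [atomOf, Set.iInf_eq_iInter, Set.mem_iInter, Set.mem_ofPred_eq]
  rw [atomOf_eq]
  refine BooleanSubalgebra.biInf_mem h𝒬 fun Q hQ => ?_
  by_cases hx : x ∈ Q
  · simp only [hx, iff_true, Set.ofPred_mem_eq]
    exact h𝒬B hQ
  · simp only [hx, iff_false]
    exact BooleanSubalgebra.compl_mem (h𝒬B hQ)

theorem mem_booleanSubalgebra_of_atomOf_subset {B : BooleanSubalgebra (Set X)} {𝒬 : Set (Set X)}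
    (h𝒬 : 𝒬.Finite) (h𝒬B : 𝒬 ⊆ B) {L : Set X} (hL : ∀ x ∈ L, atomOf 𝒬 x ⊆ L) : L ∈ B := by
  have L_eq : L = sSup (atomOf 𝒬 '' L) := by
    rw [Set.sSup_eq_sUnion, Set.sUnion_image]
    exact (Set.iUnion₂_subset hL).antisymm'
      fun x hx => Set.mem_biUnion hx (mem_atomOf_self 𝒬 x)
  rw [L_eq]
  have finite_atoms : (atomOf 𝒬 '' L).Finite :=
    (finite_range_atomOf h𝒬).subset (Set.image_subset_range _ _)
  refine BooleanSubalgebra.sSup_mem finite_atoms ?_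
  rintro _ ⟨x, -, rfl⟩
  exact atomOf_mem_booleanSubalgebra h𝒬 h𝒬B x

end Atoms

section SyntacticCongruence

variable {A : Type}

/-- The Boolean closure of a nonempty set of languages, as a Boolean subalgebra of
`Set (List A)`, which `Language A` unfolds to; it contains `∅` as `L ∩ Lᶜ`. -/
def BoolClosure.booleanSubalgebra (S : Set (Language A)) (hS : S.Nonempty) :
    BooleanSubalgebra (Set (List A)) where
  carrier := {L | BoolClosure S L}
  supClosed' _ hK _ hL := .union hK hL
  infClosed' _ hK _ hL := .inter hK hL
  bot_mem' := by
    obtain ⟨L, hL⟩ := hS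
    exact inf_compl_self L ▸ .inter (.base hL) (.compl (.base hL))
  compl_mem' hL := .compl hL

/-- The two-sided quotient `u⁻¹Kv⁻¹`. -/
def twoSidedQuotient (K : Language A) (u v : List A) : Language A :=
  {w | u ++ w ++ v ∈ K}

/-- The set of all two-sided quotients of `K`. -/
def twoSidedQuotients (K : Language A) : Set (Language A) :=
  Set.range fun p : List A × List A => twoSidedQuotient K p.1 p.2

theorem IsRegularLang.finite_twoSidedQuotients {K : Language A} (hK : IsRegularLang K) :
    (twoSidedQuotients K).Finite := by
  obtain ⟨σ, _, M, rfl⟩ := hK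
  refine (Set.finite_range fun p : σ × Set σ =>
    ({w | M.evalFrom p.1 w ∈ p.2} : Language A)).subset ?_
  rintro _ ⟨⟨u, v⟩, rfl⟩
  refine ⟨(M.eval u, {q | M.evalFrom q v ∈ M.accept}), ?_⟩
  ext w
  change M.evalFrom (M.evalFrom (M.evalFrom M.start u) w) v ∈ M.accept ↔
    M.evalFrom M.start (u ++ w ++ v) ∈ M.accept
  rw [DFA.evalFrom_of_append, DFA.evalFrom_of_append]

theorem IsQuotienting.twoSidedQuotients_subset {D : LangClass} (hD : IsQuotienting D) [Finite A]
    {K : Language A} (hK : K ∈ D A) : twoSidedQuotients K ⊆ D A := by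
  rintro _ ⟨⟨u, v⟩, rfl⟩
  cases nonempty_fintype A
  have quot_eq : twoSidedQuotient K u v = {w | w ++ v ∈ ({w | u ++ w ∈ K} : Set (List A))} := by
    ext w
    exact iff_of_eq (congrArg (· ∈ K) (List.append_assoc u w v))
  change twoSidedQuotient K u v ∈ D A
  exact quot_eq ▸ (hD A _ (hD A K hK u).1 v).2

/-- The syntactic congruence of `K`: two words are equivalent when no context `(u, v)` distinguishes
them with respect to membership in `K`. -/
def syntacticCon (K : Language A) : Con (FreeMonoid A) where
  r x y := ∀ u v : List A, u ++ x.toList ++ v ∈ K ↔ u ++ y.toList ++ v ∈ K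
  iseqv := ⟨fun _ _ _ => Iff.rfl, fun h u v => (h u v).symm,
    fun h h' u v => (h u v).trans (h' u v)⟩
  mul' {x x' y y'} hx hy u v := by
    have replace_x := hx u (y.toList ++ v)
    have replace_y := hy (u ++ x'.toList) v
    simp only [FreeMonoid.toList_mul, List.append_assoc] at replace_x replace_y ⊢
    exact replace_x.trans replace_y

theorem mem_iff_of_syntacticCon {K : Language A} {x y : List A}
    (h : syntacticCon K (FreeMonoid.ofList x) (FreeMonoid.ofList y)) : x ∈ K ↔ y ∈ K := by
  simpa only [List.nil_append, List.append_nil, FreeMonoid.toList_ofList] using h [] []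

theorem syntacticCon_iff_mem_atomOf {K : Language A} {x y : List A} :
    syntacticCon K (FreeMonoid.ofList x) (FreeMonoid.ofList y) ↔
      x ∈ atomOf (X := List A) (twoSidedQuotients K) y :=
  ⟨fun h => Set.forall_mem_range.2 fun p => h p.1 p.2, fun h u v => h _ ⟨(u, v), rfl⟩⟩

theorem IsRegularLang.finite_syntacticCon {K : Language A} (hK : IsRegularLang K) :
    Finite (syntacticCon K).Quotient := by
  let atom : List A → Set (List A) := atomOf (twoSidedQuotients K)
  have : Finite (Set.range atom) := finite_range_atomOf hK.finite_twoSidedQuotients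
  have toSetoid_eq : (syntacticCon K).toSetoid = Setoid.ker atom :=
    Setoid.ext fun _ _ => syntacticCon_iff_mem_atomOf.trans atomOf_eq_atomOf_iff.symm
  change Finite (Quotient (syntacticCon K).toSetoid)
  rw [toSetoid_eq]
  exact .of_equiv _ (Setoid.quotientKerEquivRange atom).symm

theorem IsRegularLang.boolClosure_of_recognizes_syntacticCon {K : Language A}
    (hK : IsRegularLang K) {S : Set (Language A)} (hS : twoSidedQuotients K ⊆ S) {L : Language A}
    (hL : Recognizes (syntacticCon K).mk' L) : BoolClosure S L := by
  obtain ⟨F, rfl⟩ := hL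
  have S_nonempty : S.Nonempty := (Set.range_nonempty _).mono hS
  refine mem_booleanSubalgebra_of_atomOf_subset
    (B := BoolClosure.booleanSubalgebra S S_nonempty) hK.finite_twoSidedQuotients
    (fun Q hQ => .base (hS hQ)) fun x hx y hy => ?_
  have mk_eq : (syntacticCon K).mk' (FreeMonoid.ofList y) =
      (syntacticCon K).mk' (FreeMonoid.ofList x) :=
    (Con.eq _).2 (syntacticCon_iff_mem_atomOf.2 hy)
  change (syntacticCon K).mk' (FreeMonoid.ofList y) ∈ F
  rw [mk_eq]
  exact hx

theorem Fools.exists_syntacticCon {D : LangClass} (hDquot : IsQuotienting D) {T : Type} [Monoid T]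
    {τ : FreeMonoid Bool →* T} {G : Finset T} (hfools : Fools τ G D) [Finite A]
    {K : Language (A ⊕ Bool)} (hK : K ∈ D (A ⊕ Bool)) (hKreg : IsRegularLang K) :
    ∃ u : List Bool, ∀ t ∈ G, ∃ w : List Bool,
      syntacticCon K (FreeMonoid.ofList (w.map Sum.inr)) (FreeMonoid.ofList (u.map Sum.inr)) ∧
        τ (FreeMonoid.ofList w) = t := by
  cases nonempty_fintype A
  have finite_quotient := hKreg.finite_syntacticCon
  have fintype_quotient := Fintype.ofFinite (syntacticCon K).Quotient
  obtain ⟨s, hs⟩ := hfools A (syntacticCon K).Quotient (syntacticCon K).mk' fun L hL =>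
    hKreg.boolClosure_of_recognizes_syntacticCon (hDquot.twoSidedQuotients_subset hK) hL
  obtain rfl | ⟨t₀, ht₀⟩ := G.eq_empty_or_nonempty
  · exact ⟨[], fun t ht => absurd ht (Finset.notMem_empty t)⟩
  · obtain ⟨u, hu, -⟩ := hs t₀ ht₀
    refine ⟨u, fun t ht => ?_⟩
    obtain ⟨w, hw, hwt⟩ := hs t ht
    exact ⟨w, (Con.eq _).1 (hw.trans hu.symm), hwt⟩

end SyntacticCongruence

section TaggedWord

variable {A : Type}

/-- The word `a₁w₁⋯aₘwₘ` of `(A𝔼*)*` with blocks `(a₁, w₁), …, (aₘ, wₘ)`. -/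
def taggedWord (l : List (A × List Bool)) : List (A ⊕ Bool) :=
  (l.map fun p => Sum.inl p.1 :: p.2.map Sum.inr).flatten

theorem eraseE_append (v w : List (A ⊕ Bool)) : eraseE (v ++ w) = eraseE v ++ eraseE w :=
  List.filterMap_append

theorem eraseE_map_inr (w : List Bool) : eraseE (w.map (Sum.inr : Bool → A ⊕ Bool)) = [] := by
  simp [eraseE]

theorem eraseE_taggedWord (l : List (A × List Bool)) : eraseE (taggedWord l) = l.map Prod.fst := by
  induction l with
  | nil => rfl
  | cons p l ih =>
    change p.1 :: eraseE (p.2.map Sum.inr ++ taggedWord l) = p.1 :: l.map Prod.fst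
    rw [eraseE_append, eraseE_map_inr, ih, List.nil_append]

theorem con_taggedWord_padWith {c : Con (FreeMonoid (A ⊕ Bool))} {u : List Bool}
    {l : List (A × List Bool)} (h : ∀ p ∈ l,
      c (FreeMonoid.ofList (p.2.map Sum.inr)) (FreeMonoid.ofList (u.map Sum.inr))) :
    c (FreeMonoid.ofList (taggedWord l)) (FreeMonoid.ofList (padWith u (l.map Prod.fst))) := by
  induction l with
  | nil => exact c.refl _
  | cons p l ih =>
    obtain ⟨hp, hl⟩ := List.forall_mem_cons.1 h
    exact c.mul (c.mul (c.refl (FreeMonoid.ofList [Sum.inl p.1])) hp) (ih hl)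

end TaggedWord

section Automata

variable {A Q T : Type} [DecidableEq A] [DecidableEq Q] [DecidableEq T]

theorem NFA'.mem_relabel_trans {N : NFA' A Q} {ι : {x // x ∈ N.trans} → T} {q r : Q} {b : A × T} :
    (q, b, r) ∈ (N.relabel ι).trans ↔ ∃ h : (q, b.1, r) ∈ N.trans, ι ⟨_, h⟩ = b.2 := by
  constructor
  · intro h
    obtain ⟨⟨⟨q', a, r'⟩, hx⟩, -, hb⟩ := Finset.mem_image.1 h
    obtain ⟨rfl, rfl, rfl⟩ : q' = q ∧ (a, ι ⟨(q', a, r'), hx⟩) = b ∧ r' = r := by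
      simpa only [Prod.mk.injEq] using hb
    exact ⟨hx, rfl⟩
  · rintro ⟨h, hb⟩
    exact Finset.mem_image.2 ⟨⟨_, h⟩, Finset.mem_attach _ _, by rw [hb]⟩

theorem NFA'.Path.of_relabel {N : NFA' A Q} {ι : {x // x ∈ N.trans} → T} {q r : Q}
    {v : List (A × T)} (h : (N.relabel ι).Path q v r) : N.Path q (v.map Prod.fst) r := by
  induction h with
  | nil q => exact .nil q
  | cons ht _ ih => exact .cons (NFA'.mem_relabel_trans.1 ht).1 ih

theorem NFA'.Path.exists_relabel {N : NFA' A Q} (ι : {x // x ∈ N.trans} → T) {q r : Q}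
    {w : List A} (h : N.Path q w r) :
    ∃ v : List (A × T), v.map Prod.fst = w ∧ (∀ p ∈ v, p.2 ∈ Set.range ι) ∧
      (N.relabel ι).Path q v r := by
  induction h with
  | nil q => exact ⟨[], rfl, List.forall_mem_nil _, .nil q⟩
  | @cons q r s a w ht _ ih =>
    obtain ⟨v, rfl, hv, hpath⟩ := ih
    exact ⟨(a, ι ⟨_, ht⟩) :: v, rfl, List.forall_mem_cons.2 ⟨⟨_, rfl⟩, hv⟩,
      .cons (NFA'.mem_relabel_trans.2 ⟨ht, rfl⟩) hpath⟩

theorem eraseE_mem_lang_of_mem_LAP [Monoid T] {N : NFA' A Q} {τ : FreeMonoid Bool →* T}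
    {ι : {x // x ∈ N.trans} → T} {x : List (A ⊕ Bool)} (hx : x ∈ LAP N τ ι) :
    eraseE x ∈ N.lang := by
  obtain ⟨w₀, l, rfl, q, hq, r, hr, hpath⟩ := hx
  have eraseE_eq : eraseE (w₀.map Sum.inr ++ taggedWord l) = l.map Prod.fst := by
    rw [eraseE_append, eraseE_map_inr, eraseE_taggedWord, List.nil_append]
  refine ⟨q, hq, r, hr, ?_⟩
  have hpath' := hpath.of_relabel
  rw [List.map_map] at hpath'
  exact eraseE_eq ▸ hpath'

theorem exists_mem_LAP_con_padWith [Monoid T] {N : NFA' A Q} {τ : FreeMonoid Bool →* T}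
    {ι : {x // x ∈ N.trans} → T} {c : Con (FreeMonoid (A ⊕ Bool))} {u : List Bool}
    (hu : ∀ t ∈ Set.range ι, ∃ v : List Bool,
      c (FreeMonoid.ofList (v.map Sum.inr)) (FreeMonoid.ofList (u.map Sum.inr)) ∧
        τ (FreeMonoid.ofList v) = t)
    {w : List A} (hw : w ∈ N.lang) :
    ∃ x ∈ LAP N τ ι, c (FreeMonoid.ofList x) (FreeMonoid.ofList (padWith u w)) := by
  obtain ⟨q, hq, r, hr, hpath⟩ := hw
  obtain ⟨v, rfl, hv, hvpath⟩ := hpath.exists_relabel ι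
  choose! tagWord htag_con htag_τ using hu
  let l : List (A × List Bool) := v.map fun p => (p.1, tagWord p.2)
  have map_fst_l : l.map Prod.fst = v.map Prod.fst := by
    simp only [l, List.map_map, Function.comp_def]
  have map_τ_l : l.map (fun p => (p.1, τ (FreeMonoid.ofList p.2))) = v := by
    have retag_eq_id : ∀ p ∈ v, (p.1, τ (FreeMonoid.ofList (tagWord p.2))) = id p :=
      fun p hp => Prod.ext rfl (htag_τ p.2 (hv p hp))
    rw [List.map_map]
    exact (List.map_congr_left retag_eq_id).trans v.map_id
  refine ⟨taggedWord l, ⟨[], l, rfl, q, hq, r, hr, map_τ_l.symm ▸ hvpath⟩, ?_⟩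
  rw [← map_fst_l]
  exact con_taggedWord_padWith (List.forall_mem_map.2 fun p hp => htag_con _ (hv p hp))

end Automata

theorem Separable.transfer {A B : Type} {𝒞 : Set (Language A)} {𝒟 : Set (Language B)}
    {L₁ L₂ : Language A} {L₁' L₂' : Language B} (hL : Separable 𝒞 L₁ L₂)
    (h : ∀ K ∈ 𝒞, ∃ K' ∈ 𝒟,
      (∀ w ∈ L₁', ∃ x ∈ L₁, x ∈ K ↔ w ∈ K') ∧ ∀ w ∈ L₂', ∃ x ∈ L₂, x ∈ K ↔ w ∈ K') :
    Separable 𝒟 L₁' L₂' := by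
  obtain ⟨K, hK, hL₁, hL₂⟩ := hL
  obtain ⟨K', hK', h₁, h₂⟩ := h K hK
  refine ⟨K', hK', fun w hw => ?_, eq_bot_iff.2 fun w hw => ?_⟩
  · obtain ⟨x, hx, hxw⟩ := h₁ w hw
    exact hxw.1 (hL₁ hx)
  · obtain ⟨x, hx, hxw⟩ := h₂ w hw.1
    exact (hL₂.le ⟨hx, hxw.2 hw.2⟩ : x ∈ (⊥ : Language A)).elim

theorem statement2_general
    (C D : LangClass)
    (hDreg : ∀ (A : Type) [Fintype A], ∀ L ∈ D A, IsRegularLang L)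
    (hDquot : IsQuotienting D)
    (hext : Extension C D)
    {A Q₁ Q₂ T : Type} [Finite A] [DecidableEq A] [DecidableEq Q₁] [DecidableEq Q₂]
    [Monoid T] [DecidableEq T]
    (τ : FreeMonoid Bool →* T) (G : Finset T)
    (N₁ : NFA' A Q₁) (N₂ : NFA' A Q₂)
    (ι₁ : {x // x ∈ N₁.trans} → T) (hι₁G : ∀ x, ι₁ x ∈ G)
    (ι₂ : {x // x ∈ N₂.trans} → T) (hι₂G : ∀ x, ι₂ x ∈ G)
    (hfools : Fools τ G D) :
    Separable (C A) N₁.lang N₂.lang ↔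
      Separable (D (A ⊕ Bool)) (LAP N₁ τ ι₁) (LAP N₂ τ ι₂) := by
  cases nonempty_fintype A
  constructor <;> refine fun hsep => hsep.transfer fun K hK => ?_
  · exact ⟨_, (hext A).1 K hK, fun x hx => ⟨eraseE x, eraseE_mem_lang_of_mem_LAP hx, Iff.rfl⟩,
      fun x hx => ⟨eraseE x, eraseE_mem_lang_of_mem_LAP hx, Iff.rfl⟩⟩
  · obtain ⟨u, hu⟩ := hfools.exists_syntacticCon hDquot hK (hDreg _ K hK)
    have exists_mem_LAP {Q : Type} [DecidableEq Q] {N : NFA' A Q} {ι : {x // x ∈ N.trans} → T}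
        (hιG : ∀ x, ι x ∈ G) : ∀ w ∈ N.lang, ∃ x ∈ LAP N τ ι, x ∈ K ↔ padWith u w ∈ K := by
      intro w hw
      obtain ⟨x, hx, hxu⟩ :=
        exists_mem_LAP_con_padWith (fun t ht => hu t (Set.range_subset_iff.2 hιG ht)) hw
      exact ⟨x, hx, mem_iff_of_syntacticCon hxu⟩
    exact ⟨_, (hext A).2 u K hK, exists_mem_LAP hι₁G, exists_mem_LAP hι₂G⟩

theorem statement2
    (C D : LangClass)
    (hCreg : ∀ (A : Type) [Fintype A], ∀ L ∈ C A, IsRegularLang L)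
    (hDreg : ∀ (A : Type) [Fintype A], ∀ L ∈ D A, IsRegularLang L)
    (hClat : IsLatticeClass C) (hCquot : IsQuotienting C)
    (hDlat : IsLatticeClass D) (hDquot : IsQuotienting D)
    (hext : Extension C D)
    {A Q₁ Q₂ T : Type} [Fintype A] [DecidableEq A]
    [Fintype Q₁] [DecidableEq Q₁] [Fintype Q₂] [DecidableEq Q₂]
    [Monoid T] [Fintype T] [DecidableEq T]
    (τ : FreeMonoid Bool →* T) (G : Finset T)
    (N₁ : NFA' A Q₁) (N₂ : NFA' A Q₂)
    (hcompat₁ : N₁.trans.card ≤ G.card) (hcompat₂ : N₂.trans.card ≤ G.card)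
    (ι₁ : {x // x ∈ N₁.trans} → T) (hι₁ : Function.Injective ι₁) (hι₁G : ∀ x, ι₁ x ∈ G)
    (ι₂ : {x // x ∈ N₂.trans} → T) (hι₂ : Function.Injective ι₂) (hι₂G : ∀ x, ι₂ x ∈ G)
    (hfools : Fools τ G D) :
    Separable (C A) N₁.lang N₂.lang ↔
      Separable (D (A ⊕ Bool)) (LAP N₁ τ ι₁) (LAP N₂ τ ι₂) := by
  exact statement2_general C D hDreg hDquot hext τ G N₁ N₂ ι₁ hι₁G ι₂ hι₂G hfools
end

section
/- Let C be a finite quotienting Boolean algebra of regular languages. For every level n ∈ ½ℕ of the concatenation hierarchies of bases C and C_𝔼, the class C_𝔼[n] is an extension of C[n]. -/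
/-- `C` is a quotienting Boolean algebra: a quotienting lattice closed under
complement. -/
def IsQBA (C : LangClass) : Prop :=
  IsLatticeClass C ∧ IsQuotienting C ∧
    ∀ (A : Type) [Fintype A], ∀ L ∈ C A, Lᶜ ∈ C A

/-- `C` is a finite class: `C(A)` is a finite set for every alphabet. -/
def IsFiniteClass (C : LangClass) : Prop :=
  ∀ (A : Type) [Fintype A], (C A).Finite

/-- The class `C_𝔼`, defined on the alphabets `A ∪ 𝔼`:
`C_𝔼(A ∪ 𝔼) = {γ⁻¹(L) | L ∈ C(A)}` where `γ` erases the letters of `𝔼`. -/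
def Ctag (C : LangClass) (A : Type) : Set (Language (A ⊕ Bool)) :=
  {L | ∃ K ∈ C A, L = {w : List (A ⊕ Bool) | eraseE w ∈ K}}

/-- Level `k/2` of the concatenation hierarchy of a basis defined on the alphabets
`A ∪ 𝔼` (such as `C_𝔼`); indexing as in `hlevel`. -/
def hlevelS (D : ∀ A : Type, Set (Language (A ⊕ Bool))) :
    ℕ → ∀ A : Type, Set (Language (A ⊕ Bool))
  | 0 => D
  | k + 1 => fun A =>
      if k % 2 = 0 then {L | PolClosure (hlevelS D k A) L}
      else {L | BoolClosure (hlevelS D k A) L}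

/-- `D` (a class defined on the alphabets `A ∪ 𝔼`) is an extension of `C`. -/
def ExtensionS (C : LangClass) (D : ∀ A : Type, Set (Language (A ⊕ Bool))) : Prop :=
  ∀ (A : Type) [Fintype A],
    (∀ K ∈ C A, {w : List (A ⊕ Bool) | eraseE w ∈ K} ∈ D A) ∧
    (∀ u : List Bool, ∀ K ∈ D A, {w : List A | padWith u w ∈ K} ∈ C A)

/-- The tagging `P = (τ : 𝔼* → T, G)` fools the class `D` (defined on the alphabets
`A ∪ 𝔼`). -/
def FoolsS {T : Type} [Monoid T] (τ : FreeMonoid Bool →* T) (G : Finset T)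
    (D : ∀ A : Type, Set (Language (A ⊕ Bool))) : Prop :=
  ∀ (A : Type) [Fintype A] (M : Type) [Monoid M] [Fintype M]
    (α : FreeMonoid (A ⊕ Bool) →* M),
    (∀ L : Language (A ⊕ Bool), Recognizes α L → BoolClosure (D A) L) →
    ∃ s : M, ∀ t ∈ G, ∃ w : List Bool,
      α (FreeMonoid.ofList (w.map Sum.inr)) = s ∧ τ (FreeMonoid.ofList w) = t

/-! The erasing morphism `γ` and the morphisms `λᵤ` are treated alike. Say that a morphism
`φ : A* → B*` pulls a set `S` of languages over `B` back into a set `T` of languages over `A` when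
`φ⁻¹(x⁻¹Ky⁻¹) ∈ T` for all `K ∈ S` and `x, y ∈ B*`. If `A` is finite and `∅ ∈ T`, this property
passes to the Boolean and polynomial closures of `S` and `T`, hence to all levels of their
hierarchies. Keeping track of the quotients is what makes the polynomial step work: when
`x φ(w) y ∈ K a L`, the marked letter `a` lies in `x`, in the image `φ(b) = p a q` of a letter `b`
of `w`, or in `y`, and the three cases give finite unions of languages of the forms `φ⁻¹(q⁻¹Ly⁻¹)`,
`φ⁻¹(x⁻¹Kp⁻¹) b φ⁻¹(q⁻¹Ly⁻¹)` and `φ⁻¹(x⁻¹Kp⁻¹)`. At level `0`, the property for `γ` is closure of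
`C` under quotients, and the property for `λᵤ` follows from it by `γ ∘ λᵤ = id`. -/

section Words

variable {A B : Type*}

/-- The set of pairs `(p, q)` such that `x = p a q`: the occurrences of the letter `a` in the word
`x`, each recorded by the factors on its two sides. -/
def letterSplits (a : A) (x : List A) : Set (List A × List A) :=
  {s | x = s.1 ++ a :: s.2}

theorem finite_letterSplits (a : A) (x : List A) : (letterSplits a x).Finite := by
  refine ((Set.finite_Iic x.length).image fun n => (x.take n, x.drop (n + 1))).subset ?_
  rintro ⟨p, q⟩ rfl
  exact ⟨p.length, by simp, by simp [List.drop_append]⟩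

theorem append_eq_append_cons_iff {x y k l : List A} {a : A} :
    x ++ y = k ++ a :: l ↔
      (∃ q, x = k ++ a :: q ∧ l = q ++ y) ∨ (∃ p, y = p ++ a :: l ∧ k = x ++ p) := by
  rw [List.append_eq_append_iff]
  constructor
  · rintro (⟨p, hk, hy⟩ | ⟨_ | ⟨d, q⟩, hx, hl⟩)
    · exact .inr ⟨p, hy, hk⟩
    · exact .inr ⟨[], by simpa using hl.symm, by simpa using hx.symm⟩
    · obtain ⟨rfl, rfl⟩ := List.cons.inj hl
      exact .inl ⟨q, hx, rfl⟩
  · rintro (⟨q, rfl, rfl⟩ | ⟨p, rfl, rfl⟩)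
    · exact .inr ⟨a :: q, rfl, rfl⟩
    · exact .inl ⟨p, rfl, rfl⟩

theorem flatMap_eq_append_cons_iff {f : A → List B} {w : List A} {k l : List B} {a : B} :
    w.flatMap f = k ++ a :: l ↔
      ∃ w₁ b w₂ p q, w = w₁ ++ b :: w₂ ∧ f b = p ++ a :: q ∧
        k = w₁.flatMap f ++ p ∧ l = q ++ w₂.flatMap f := by
  constructor
  · induction w generalizing k with
    | nil => simp
    | cons b w ih =>
      rw [List.flatMap_cons, append_eq_append_cons_iff]
      rintro (⟨q, hb, rfl⟩ | ⟨p, hw, rfl⟩)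
      · exact ⟨[], b, w, k, q, rfl, hb, rfl, rfl⟩
      · obtain ⟨w₁, c, w₂, p, q, rfl, hc, rfl, rfl⟩ := ih hw
        exact ⟨b :: w₁, c, w₂, p, q, rfl, hc, by simp, rfl⟩
  · rintro ⟨w₁, b, w₂, p, q, rfl, hb, rfl, rfl⟩
    simp [hb]

end Words

section Languages

variable {A B : Type}

theorem mem_marked_mul_iff {K L : Language A} {a : A} {w : List A} :
    w ∈ K * {[a]} * L ↔ ∃ k ∈ K, ∃ l ∈ L, w = k ++ a :: l := by
  simp only [Language.mem_mul]
  constructor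
  · rintro ⟨_, ⟨k, hk, _, rfl, rfl⟩, l, hl, rfl⟩
    exact ⟨k, hk, l, hl, by simp⟩
  · rintro ⟨k, hk, l, hl, rfl⟩
    exact ⟨k ++ [a], ⟨k, hk, [a], rfl, rfl⟩, l, hl, by simp⟩

theorem mem_sup_iff {K L : Language A} {w : List A} : w ∈ K ⊔ L ↔ w ∈ K ∨ w ∈ L :=
  Iff.rfl

theorem PolClosure.biSup {ι : Type*} {S : Set (Language A)} (hbot : ⊥ ∈ S) {s : Set ι}
    (hs : s.Finite) {F : ι → Language A} (hF : ∀ i ∈ s, PolClosure S (F i)) :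
    PolClosure S (⨆ i ∈ s, F i) := by
  induction s, hs using Set.Finite.induction_on with
  | empty => simpa only [iSup_emptyset] using .base hbot
  | insert _ _ ih =>
    rw [iSup_insert]
    exact (hF _ (Set.mem_insert _ _)).union (ih fun j hj => hF j (Set.mem_insert_of_mem _ hj))

/-- The language `φ⁻¹(x⁻¹Ly⁻¹)`, where the morphism `φ : A* → B*` is given by the images `f a` of
the letters, so that `φ(w)` is `w.flatMap f`. -/
def quotientPreimage (f : A → List B) (x y : List B) (L : Language B) : Language A :=
  {w : List A | x ++ w.flatMap f ++ y ∈ L}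

theorem mem_quotientPreimage {f : A → List B} {x y : List B} {L : Language B} {w : List A} :
    w ∈ quotientPreimage f x y L ↔ x ++ w.flatMap f ++ y ∈ L :=
  Iff.rfl

theorem quotientPreimage_marked_mul (f : A → List B) (x y : List B) (K L : Language B) (a : B) :
    quotientPreimage f x y (K * {[a]} * L) =
      (⨆ s ∈ letterSplits a x ∩ {s | s.1 ∈ K}, quotientPreimage f s.2 y L) ⊔
      (⨆ b, ⨆ s ∈ letterSplits a (f b),
        quotientPreimage f x s.1 K * {[b]} * quotientPreimage f s.2 y L) ⊔
      (⨆ s ∈ letterSplits a y ∩ {s | s.2 ∈ L}, quotientPreimage f x s.1 K) := by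
  ext w
  simp only [mem_sup_iff, Language.mem_iSup, mem_marked_mul_iff, mem_quotientPreimage,
    exists_prop, Prod.exists, letterSplits, Set.mem_inter_iff, Set.mem_ofPred_eq]
  constructor
  · rintro ⟨k, hk, l, hl, h⟩
    rcases append_eq_append_cons_iff.1 h with ⟨q, hxw, rfl⟩ | ⟨p, hy, rfl⟩
    · rcases append_eq_append_cons_iff.1 hxw with ⟨r, hx, rfl⟩ | ⟨r, hw, rfl⟩
      · exact .inl (.inl ⟨k, r, ⟨hx, hk⟩, hl⟩)
      · obtain ⟨w₁, b, w₂, p, q, rfl, hb, rfl, rfl⟩ := flatMap_eq_append_cons_iff.1 hw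
        exact .inl (.inr ⟨b, p, q, hb, w₁, by simpa using hk, w₂, hl, rfl⟩)
    · exact .inr ⟨p, l, ⟨hy, hl⟩, hk⟩
  · rintro ((⟨p, q, ⟨rfl, hp⟩, hw⟩ | ⟨b, p, q, hb, w₁, hw₁, w₂, hw₂, rfl⟩) | ⟨p, q, ⟨rfl, hq⟩, hw⟩)
    · exact ⟨p, hp, _, hw, by simp⟩
    · exact ⟨_, hw₁, _, hw₂, by simp [hb]⟩
    · exact ⟨_, hw, q, hq, by simp⟩

/-- The morphism `φ` with letter images `f` sends, by inverse image, every two-sided quotient of a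
language of `S` to a language of `T`. -/
def PullsBack (f : A → List B) (S : Set (Language B)) (T : Set (Language A)) : Prop :=
  ∀ K ∈ S, ∀ x y, quotientPreimage f x y K ∈ T

namespace PullsBack

variable {f : A → List B} {S : Set (Language B)} {T : Set (Language A)}

theorem preimage_mem (h : PullsBack f S T) {K : Language B} (hK : K ∈ S) :
    {w : List A | w.flatMap f ∈ K} ∈ T := by
  have hmem := h K hK [] []
  simp only [quotientPreimage, List.nil_append, List.append_nil] at hmem
  exact hmem

theorem boolClosure (h : PullsBack f S T) :
    PullsBack f {L | BoolClosure S L} {L | BoolClosure T L} := by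
  intro K hK x y
  induction hK with
  | base hK => exact .base (h _ hK x y)
  | compl _ ih => exact .compl ih
  | union _ _ ihK ihL => exact .union ihK ihL
  | inter _ _ ihK ihL => exact .inter ihK ihL

theorem polClosure [Finite A] (hbot : ⊥ ∈ T) (h : PullsBack f S T) :
    PullsBack f {L | PolClosure S L} {L | PolClosure T L} := by
  intro K hK
  induction hK with
  | base hK => exact fun x y => .base (h _ hK x y)
  | union _ _ ihK ihL => exact fun x y => .union (ihK x y) (ihL x y)
  | @marked K L a _ _ ihK ihL =>
    intro x y
    rw [quotientPreimage_marked_mul, ← iSup_univ (f := fun b => ⨆ s ∈ letterSplits a (f b), _)]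
    refine .union (.union ?_ ?_) ?_
    · exact .biSup hbot ((finite_letterSplits a x).inter_of_left _) fun s _ => ihL s.2 y
    · exact .biSup hbot Set.finite_univ fun b _ =>
        .biSup hbot (finite_letterSplits a (f b)) fun s _ => .marked b (ihK x s.1) (ihL s.2 y)
    · exact .biSup hbot ((finite_letterSplits a y).inter_of_left _) fun s _ => ihK x s.1

end PullsBack

/-- Level `n/2` of the concatenation hierarchy of basis `S` over one fixed alphabet: the common form
of `hlevel` and `hlevelS`, whose levels are computed alphabet by alphabet. -/
def concatLevel (S : Set (Language A)) : ℕ → Set (Language A)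
  | 0 => S
  | k + 1 =>
      if k % 2 = 0 then {L | PolClosure (concatLevel S k) L}
      else {L | BoolClosure (concatLevel S k) L}

theorem hlevel_eq_concatLevel (C : LangClass) (n : ℕ) (A : Type) :
    hlevel C n A = concatLevel (C A) n := by
  induction n with
  | zero => rfl
  | succ k ih => simp only [hlevel, concatLevel, ih]

theorem hlevelS_eq_concatLevel (D : ∀ A : Type, Set (Language (A ⊕ Bool))) (n : ℕ) (A : Type) :
    hlevelS D n A = concatLevel (D A) n := by
  induction n with
  | zero => rfl
  | succ k ih => simp only [hlevelS, concatLevel, ih]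

theorem subset_concatLevel (S : Set (Language A)) (n : ℕ) : S ⊆ concatLevel S n := by
  induction n with
  | zero => exact subset_rfl
  | succ k ih =>
    intro L hL
    rw [concatLevel]
    split_ifs
    · exact .base (ih hL)
    · exact .base (ih hL)

theorem PullsBack.concatLevel [Finite A] {f : A → List B} {S : Set (Language B)}
    {T : Set (Language A)} (hbot : ⊥ ∈ T) (h : PullsBack f S T) (n : ℕ) :
    PullsBack f (concatLevel S n) (concatLevel T n) := by
  induction n with
  | zero => exact h
  | succ k ih =>
    simp only [_root_.concatLevel]
    split_ifs
    · exact ih.polClosure (subset_concatLevel T k hbot)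
    · exact ih.boolClosure

end Languages

section Tagging

variable {A : Type}

/-- The image under `γ` of a letter of `A ∪ 𝔼`. -/
def eraseLetter : A ⊕ Bool → List A :=
  Sum.elim (fun a => [a]) fun _ => []

/-- The image `a · u` of the letter `a` under `λᵤ`. -/
def padLetter (u : List Bool) (a : A) : List (A ⊕ Bool) :=
  Sum.inl a :: u.map Sum.inr

theorem eraseE_eq_flatMap (w : List (A ⊕ Bool)) : eraseE w = w.flatMap eraseLetter := by
  induction w with
  | nil => rfl
  | cons c w ih =>
    rw [List.flatMap_cons, ← ih]
    cases c <;> rfl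

theorem padWith_eq_flatMap (u : List Bool) (w : List A) :
    padWith u w = w.flatMap (padLetter u) :=
  rfl

theorem eraseE_padWith (u : List Bool) (w : List A) : eraseE (padWith u w) = w := by
  have eraseLetter_padLetter (a : A) : (padLetter u a).flatMap eraseLetter = [a] := by
    simp [padLetter, eraseLetter, List.flatMap_map]
  simp only [eraseE_eq_flatMap, padWith_eq_flatMap, List.flatMap_assoc, eraseLetter_padLetter,
    List.flatMap_singleton']

variable [Finite A] {C : LangClass}

theorem IsQuotienting.twoSided_quotient_mem (hquot : IsQuotienting C) {L : Language A}
    (hL : L ∈ C A) (x y : List A) : {w : List A | x ++ w ++ y ∈ L} ∈ C A := by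
  have := Fintype.ofFinite A
  simp only [List.append_assoc]
  exact (hquot A _ (hquot A L hL x).1 y).2

theorem pullsBack_eraseLetter (hquot : IsQuotienting C) :
    PullsBack eraseLetter (C A) (Ctag C A) := by
  intro K hK x y
  refine ⟨_, hquot.twoSided_quotient_mem hK x y, ?_⟩
  simp only [quotientPreimage, eraseE_eq_flatMap]
  rfl

theorem pullsBack_padLetter (hquot : IsQuotienting C) (u : List Bool) :
    PullsBack (padLetter u) (Ctag C A) (C A) := by
  rintro _ ⟨K, hK, rfl⟩ x y
  have erase_eq (w : List A) :
      eraseE (x ++ w.flatMap (padLetter u) ++ y) = eraseE x ++ w ++ eraseE y := by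
    rw [← padWith_eq_flatMap, eraseE_append, eraseE_append, eraseE_padWith]
  have h := hquot.twoSided_quotient_mem hK (eraseE x) (eraseE y)
  simp only [← erase_eq] at h
  exact h

end Tagging

theorem statement6_general (C : LangClass) (hbot : ∀ (A : Type) [Fintype A], ⊥ ∈ C A)
    (hquot : IsQuotienting C) (n : ℕ) :
    ExtensionS (hlevel C n) (hlevelS (Ctag C) n) := by
  intro A _
  have hbot_tag : ⊥ ∈ Ctag C A := ⟨⊥, hbot A, rfl⟩
  rw [hlevel_eq_concatLevel, hlevelS_eq_concatLevel]
  refine ⟨fun K hK => ?_, fun u K hK => ?_⟩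
  · simpa only [eraseE_eq_flatMap] using
      ((pullsBack_eraseLetter hquot).concatLevel hbot_tag n).preimage_mem hK
  · exact ((pullsBack_padLetter hquot u).concatLevel (hbot A) n).preimage_mem hK

theorem statement6 (C : LangClass) (hqba : IsQBA C) (hfin : IsFiniteClass C)
    (hreg : ∀ (A : Type) [Fintype A], ∀ L ∈ C A, IsRegularLang L) (n : ℕ) :
    ExtensionS (hlevel C n) (hlevelS (Ctag C) n) :=
  statement6_general C (fun A _ => (hqba.1 A).1) hqba.2.1 n
end

section
/- Let A be an alphabet, let α: A* → M and β: A* → N be AT-compatible morphisms, and let S ⊆ N be a good subset. Then every pair (s,T) ∈ M × 2^N which is the root label of some (α,β,S)-tree is alphabet safe, i.e. alph(s) = alph(t) for every t ∈ T. -/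
open scoped Pointwise

/-! Infrastructure: the class `AT` of alphabet testable languages has canonical
equivalence `u ∼_AT v ↔ alph(u) = alph(v)`, so that `A*/∼_AT` is the monoid
`(2^A, ∪)` and `[w]_AT = alph(w)`. `AT`-compatible morphisms, good subsets and
`(α,β,S)`-trees (represented through the inductive predicate describing the possible
root labels). -/

/-- The monoid `(2^A, ∪)` of subsets of `A` under union (with neutral element `∅`);
this is the monoid `A*/∼_AT`. -/
def UnionMonoid (A : Type) : Type := Set A

instance (A : Type) : Monoid (UnionMonoid A) where
  mul s t := (s ∪ t : Set A)
  one := (∅ : Set A)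
  mul_assoc s t u := Set.union_assoc s t u
  one_mul s := Set.empty_union s
  mul_one s := Set.union_empty s

/-- `alph(w)`: the set of letters occurring in the word `w`, as an element of the
monoid `(2^A, ∪)`. -/
def alphOf {A : Type} (w : List A) : UnionMonoid A :=
  ({a | a ∈ w} : Set A)

/-- `S ⊆ N` is good (for `β`) when it contains `β(A*)` and is closed under
multiplication. -/
def GoodSubset {A N : Type} [Monoid N] (β : FreeMonoid A →* N) (S : Set N) : Prop :=
  (∀ w : FreeMonoid A, β w ∈ S) ∧ ∀ s ∈ S, ∀ t ∈ S, s * t ∈ S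

/-- `TreeRoot α β clM clN S s T` holds exactly when `(s,T) ∈ M × 2^N` is the root
label of some `(α,β,S)`-tree; here `clM, clN` are the morphisms `s ↦ alph(s)` coming
with the `AT`-compatibility of `α` and `β`. The three constructors correspond to the
three kinds of nodes (leaves, binary nodes and `S`-operation nodes). -/
inductive TreeRoot {A M N Q : Type} [Monoid M] [Monoid N] [Monoid Q]
    (α : FreeMonoid A →* M) (β : FreeMonoid A →* N)
    (clM : M →* Q) (clN : N →* Q) (S : Set N) : M → Set N → Prop
  | leaf (w : FreeMonoid A) : TreeRoot α β clM clN S (α w) {β w}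
  | binary {s₁ : M} {T₁ : Set N} {s₂ : M} {T₂ : Set N} (T : Set N) :
      TreeRoot α β clM clN S s₁ T₁ → TreeRoot α β clM clN S s₂ T₂ →
      T ⊆ T₁ * T₂ → TreeRoot α β clM clN S (s₁ * s₂) T
  | op {e : M} {E : Set N} (T : Set N) :
      TreeRoot α β clM clN S e E → e * e = e → E * E = E →
      T ⊆ E * {t | t ∈ S ∧ clM e = clN t} * E →
      TreeRoot α β clM clN S e T

/-- The label `(s,T)` is safe when every element of `T` has the same class as `s`. The classes are
taken in an arbitrary `Q`, through `f` and `g`; alphabet safety is the case where these are the two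
maps `alph` into `Q = 2^A`. -/
def SafeLabel {M N Q : Type*} (f : M → Q) (g : N → Q) (s : M) (T : Set N) : Prop :=
  ∀ t ∈ T, g t = f s

namespace SafeLabel

variable {M N Q : Type*}

theorem mono {f : M → Q} {g : N → Q} {s : M} {T T' : Set N} (hT : SafeLabel f g s T)
    (hsub : T' ⊆ T) : SafeLabel f g s T' :=
  fun t ht => hT t (hsub ht)

variable [Mul M] [Mul N] [Mul Q] {F G : Type*} [FunLike F M Q] [MulHomClass F M Q]
  [FunLike G N Q] [MulHomClass G N Q] {f : F} {g : G}

theorem mul {s₁ s₂ : M} {T₁ T₂ : Set N} (h₁ : SafeLabel f g s₁ T₁) (h₂ : SafeLabel f g s₂ T₂) :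
    SafeLabel f g (s₁ * s₂) (T₁ * T₂) := by
  rintro _ ⟨t₁, ht₁, t₂, ht₂, rfl⟩
  calc g (t₁ * t₂) = g t₁ * g t₂ := map_mul g t₁ t₂
    _ = f s₁ * f s₂ := by rw [h₁ t₁ ht₁, h₂ t₂ ht₂]
    _ = f (s₁ * s₂) := (map_mul f s₁ s₂).symm

theorem mul_of_isIdempotentElem {e : M} {T₁ T₂ : Set N} (h₁ : SafeLabel f g e T₁)
    (h₂ : SafeLabel f g e T₂) (he : IsIdempotentElem e) : SafeLabel f g e (T₁ * T₂) :=
  he.eq ▸ h₁.mul h₂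

end SafeLabel

-- With `Q = A*/∼_C`, this is the corresponding statement for `C`-compatible morphisms, for any
-- class `C` whose equivalence `∼_C` is a congruence.
theorem statement12_general {A M N Q : Type} [Monoid M] [Monoid N] [Monoid Q]
    (α : FreeMonoid A →* M) (β : FreeMonoid A →* N) (clM : M →* Q) (clN : N →* Q)
    (hcl : clM.comp α = clN.comp β) (S : Set N) (s : M) (T : Set N)
    (htree : TreeRoot α β clM clN S s T) :
    ∀ t ∈ T, clN t = clM s := by
  change SafeLabel clM clN s T
  induction htree with
  | leaf w =>
    rintro _ rfl
    exact (DFunLike.congr_fun hcl w).symm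
  | binary T _ _ hT ih₁ ih₂ => exact (ih₁.mul ih₂).mono hT
  | @op e E T _ he _ hT ihE =>
    have hmid : SafeLabel clM clN e {t | t ∈ S ∧ clM e = clN t} := fun _ ht => ht.2.symm
    exact ((ihE.mul_of_isIdempotentElem hmid he).mul_of_isIdempotentElem ihE he).mono hT

/-- Every root label `(s,T)` of an `(α,β,S)`-tree (for `AT`-compatible `α, β` and a
good subset `S`) is alphabet safe: `alph(t) = alph(s)` for every `t ∈ T`. -/
theorem statement12 {A : Type} [Fintype A]
    {M N : Type} [Monoid M] [Fintype M] [Monoid N] [Fintype N]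
    (α : FreeMonoid A →* M) (β : FreeMonoid A →* N)
    (clM : M →* UnionMonoid A)
    (hclM : ∀ w : FreeMonoid A, clM (α w) = alphOf (FreeMonoid.toList w))
    (clN : N →* UnionMonoid A)
    (hclN : ∀ w : FreeMonoid A, clN (β w) = alphOf (FreeMonoid.toList w))
    (S : Set N) (hS : GoodSubset β S)
    (s : M) (T : Set N) (htree : TreeRoot α β clM clN S s T) :
    ∀ t ∈ T, clN t = clM s :=
  statement12_general α β clM clN (MonoidHom.ext fun w => (hclM w).trans (hclN w).symm) S s T htree
end

section
/- Let A be an alphabet and H, H' ⊆ A* two languages. Let B = A ∪ {#, $} with #, $ ∉ A, and define L = #(H'#(A*$#)*)*H#(A*$#)* ⊆ B* and L' = #(H'#(A*$#)*)* ⊆ B*. Then H is ST[3/2]-separable from H' if and only if L is ST[2]-separable from L'. -/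
open scoped Computability

/-- The basis of the Straubing-Thérien hierarchy: `ST[0](A) = {∅, A*}`. -/
def STbasis : LangClass := fun A => {(⊥ : Language A), (⊤ : Language A)}

section Statement15

variable {A : Type}

/-- The alphabet `B = A ∪ {#, $}`: the letter `#` is `Sum.inr false` and the letter
`$` is `Sum.inr true`. -/
local notation "B" => (A ⊕ Bool)

/-- A language `H ⊆ A*` viewed as a language over `B`. -/
def embA (H : Language A) : Language (A ⊕ Bool) :=
  {w | ∃ v ∈ H, w = v.map Sum.inl}

/-- The singleton language `{#}`. -/
def hashL : Language (A ⊕ Bool) := {w | w = [Sum.inr false]}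

/-- The singleton language `{$}`. -/
def dollarL : Language (A ⊕ Bool) := {w | w = [Sum.inr true]}

/-- The language `A* ⊆ B*`. -/
def AstarL : Language (A ⊕ Bool) := {w | ∀ x ∈ w, ∃ a : A, x = Sum.inl a}

/-- `(A*$#)*`. -/
def innerL : Language (A ⊕ Bool) := (AstarL * dollarL * hashL)∗

/-- The language `L = #(H'#(A*$#)*)* H #(A*$#)*`. -/
def LangL (H H' : Language A) : Language (A ⊕ Bool) :=
  hashL * (embA H' * hashL * innerL)∗ * embA H * hashL * innerL

/-- The language `L' = #(H'#(A*$#)*)*`. -/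
def LangL' (H' : Language A) : Language (A ⊕ Bool) :=
  hashL * (embA H' * hashL * innerL)∗

/-! The proof rests on a family of preorders `≤_{T,n}` on words, with `T` a finite set of letters
and `n` a rank: `u ≤_{T,0} v` when every letter of `T` in `v` occurs in `u`, and `u ≤_{T,n+1} v`
when moreover each factorization `u = s a t` with `a ∈ T` is matched by a factorization
`v = s' a t'` with `s ≤_{T,n} s'` and `t ≤_{T,n} t'`. The languages of level `3/2` are exactly the
upper sets of these preorders. They are compatible with concatenation, and they allow pumping:
`x^N ≤_{T,n} x^N y x^N` as soon as `x` contains all letters of `T` and `2^n ≤ N`.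

If `K` separates `H` from `H'` at level `3/2`, then `B* # K # B*` separates `L` from `L'`, since the
factors of a word of `L'` that lie in `A*` between two consecutive `#` belong to `H'`. Conversely,
if `H` is not separable from `H'`, then for all `T` and `n` there are `h ∈ H` and `h' ∈ H'` with
`h ≤_{T,n} h'`. With `z = # x^N`, where `x ∈ A*$#` contains all letters of `T`, the words
`v_i = #(h' z)^(i+1) ∈ L'` and `u_i = v_i h z ∈ L` form an infinite chain
`v_0 ≤ u_0 ≤ v_1 ≤ u_1 ≤ ⋯`: the step `v_i ≤ u_i` is pumping, the step `u_i ≤ v_{i+1}` replaces `h`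
by `h'`. Membership in a Boolean combination of upper sets is eventually constant along such a
chain, so no language of level `2` separates `L` from `L'`. -/

/-! ### Words -/

section Words

variable {α : Type*}

theorem append_eq_append_cons_iff_s15 {p w u v : List α} {a : α} :
    p ++ w = u ++ a :: v ↔
      (∃ r, p = u ++ a :: r ∧ v = r ++ w) ∨ (∃ r, u = p ++ r ∧ w = r ++ a :: v) := by
  rw [List.append_eq_append_iff, or_comm]
  constructor
  · rintro (⟨_ | ⟨b, r⟩, rfl, h⟩ | h)
    · exact .inr ⟨[], by simp, h.symm⟩
    · obtain ⟨rfl, rfl⟩ := List.cons.inj h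
      exact .inl ⟨r, rfl, rfl⟩
    · exact .inr h
  · rintro (⟨r, rfl, rfl⟩ | h)
    · exact .inl ⟨a :: r, rfl, rfl⟩
    · exact .inr h

theorem append_cons_eq_append_cons_iff {u v u' v' : List α} {a b : α} :
    u ++ a :: v = u' ++ b :: v' ↔ (u = u' ∧ a = b ∧ v = v') ∨
      (∃ r, v = r ++ b :: v' ∧ u' = u ++ a :: r) ∨ (∃ r, u = u' ++ b :: r ∧ v' = r ++ a :: v) := by
  rw [append_eq_append_cons_iff_s15]
  constructor
  · rintro (h | ⟨_ | ⟨c, r⟩, rfl, h⟩)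
    · exact .inr (.inr h)
    · obtain ⟨rfl, rfl⟩ := List.cons.inj h
      exact .inl ⟨by simp, rfl, rfl⟩
    · obtain ⟨rfl, rfl⟩ := List.cons.inj h
      exact .inr (.inl ⟨r, rfl, rfl⟩)
  · rintro (⟨rfl, rfl, rfl⟩ | ⟨r, rfl, rfl⟩ | h)
    · exact .inr ⟨[], by simp, rfl⟩
    · exact .inr ⟨a :: r, rfl, rfl⟩
    · exact .inl h

theorem cons_sublist_append_cons_iff {a : α} {l s t : List α} (hs : a ∉ s) :
    (a :: l).Sublist (s ++ a :: t) ↔ l.Sublist t := by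
  induction s with
  | nil => exact List.cons_sublist_cons
  | cons b s ih =>
    obtain ⟨hab, has⟩ : ¬a = b ∧ a ∉ s := by simpa only [List.mem_cons, not_or] using hs
    rw [List.cons_append, List.cons_sublist_cons', ih has]
    simp [hab]

/-- The power `x ^ n` of a word `x`. -/
def wordPow (x : List α) (n : ℕ) : List α := (List.replicate n x).flatten

theorem wordPow_add (x : List α) (m n : ℕ) : wordPow x (m + n) = wordPow x m ++ wordPow x n := by
  simp only [wordPow, List.replicate_add, List.flatten_append]

theorem wordPow_one (x : List α) : wordPow x 1 = x := by simp [wordPow]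

theorem wordPow_succ (x : List α) (n : ℕ) : wordPow x (n + 1) = wordPow x n ++ x := by
  rw [wordPow_add, wordPow_one]

theorem mem_wordPow {a : α} {x : List α} {n : ℕ} : a ∈ wordPow x n ↔ n ≠ 0 ∧ a ∈ x := by
  simp [wordPow, and_comm]

theorem wordPow_mem_kstar {L : Language α} {x : List α} (hx : x ∈ L) (n : ℕ) :
    wordPow x n ∈ L∗ :=
  Language.join_mem_kstar fun _ hy => List.eq_of_mem_replicate hy ▸ hx

theorem exists_of_wordPow_eq_append_cons {x s t : List α} {a : α} {n : ℕ}
    (h : wordPow x n = s ++ a :: t) :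
    ∃ i j s' t', n = i + 1 + j ∧ x = s' ++ a :: t' ∧
      s = wordPow x i ++ s' ∧ t = t' ++ wordPow x j := by
  induction n generalizing t with
  | zero => simp [wordPow] at h
  | succ n ih =>
    rw [wordPow_succ, append_eq_append_cons_iff_s15] at h
    rcases h with ⟨r, hr, rfl⟩ | ⟨r, rfl, hx⟩
    · obtain ⟨i, j, s', t', rfl, hx, rfl, rfl⟩ := ih hr
      exact ⟨i, j + 1, s', t', rfl, hx, rfl, by rw [wordPow_succ, List.append_assoc]⟩
    · exact ⟨n, 0, r, t, rfl, hx, rfl, by simp [wordPow]⟩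

end Words

/-! ### Marked concatenation -/

theorem mem_marked {K L : Language A} {a : A} {w : List A} :
    w ∈ K * {[a]} * L ↔ ∃ u ∈ K, ∃ v ∈ L, w = u ++ a :: v := by
  constructor
  · rintro ⟨_, ⟨u, hu, _, rfl, rfl⟩, v, hv, rfl⟩
    exact ⟨u, hu, v, hv, by simp⟩
  · rintro ⟨u, hu, v, hv, rfl⟩
    exact ⟨u ++ [a], ⟨u, hu, [a], rfl, rfl⟩, v, hv, by simp⟩

theorem PolClosure.mono {S S' : Set (Language A)} (hS : S ⊆ S') {L : Language A}
    (h : PolClosure S L) : PolClosure S' L := by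
  induction h with
  | base h => exact .base (hS h)
  | union _ _ ih ih' => exact .union ih ih'
  | marked a _ _ ih ih' => exact .marked a ih ih'

/-- Finite unions of rectangles `P × Q` of languages `P, Q ∈ S`, as binary relations on words. -/
inductive RectUnion (S : Set (Language A)) : Set (List A × List A) → Prop
  | rect {P Q : Language A} : P ∈ S → Q ∈ S → RectUnion S {p | p.1 ∈ P ∧ p.2 ∈ Q}
  | union {R R' : Set (List A × List A)} : RectUnion S R → RectUnion S R' → RectUnion S (R ∪ R')

/-- The pairs `(u, v)` such that `u a v ∈ L`. -/
def splittings (L : Language A) (a : A) : Set (List A × List A) := {p | p.1 ++ a :: p.2 ∈ L}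

theorem RectUnion.mono {S S' : Set (Language A)} (hS : S ⊆ S') {R : Set (List A × List A)}
    (h : RectUnion S R) : RectUnion S' R := by
  induction h with
  | rect hP hQ => exact .rect (hS hP) (hS hQ)
  | union _ _ ih ih' => exact .union ih ih'

theorem RectUnion.image_append_right {S : Set (Language A)} {R : Set (List A × List A)}
    {L : Language A} {b : A} (hR : RectUnion {K | PolClosure S K} R) (hL : PolClosure S L) :
    RectUnion {K | PolClosure S K} {p | ∃ r, ∃ y ∈ L, p.2 = r ++ b :: y ∧ (p.1, r) ∈ R} := by
  induction hR with
  | @rect P Q hP hQ =>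
    convert RectUnion.rect hP (PolClosure.marked b hQ hL) using 1
    ext p
    simp only [Set.mem_ofPred_eq, mem_marked]
    constructor
    · rintro ⟨r, y, hy, hp, hP, hQ⟩
      exact ⟨hP, r, hQ, y, hy, hp⟩
    · rintro ⟨hP, r, hQ, y, hy, hp⟩
      exact ⟨r, y, hy, hp, hP, hQ⟩
  | union _ _ ih ih' =>
    convert RectUnion.union ih ih' using 1
    ext p
    simp only [Set.mem_union, Set.mem_ofPred_eq, and_or_left, exists_or]

theorem RectUnion.image_append_left {S : Set (Language A)} {R : Set (List A × List A)}
    {K : Language A} {b : A} (hK : PolClosure S K) (hR : RectUnion {K | PolClosure S K} R) :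
    RectUnion {K | PolClosure S K} {p | ∃ r, ∃ x ∈ K, p.1 = x ++ b :: r ∧ (r, p.2) ∈ R} := by
  induction hR with
  | @rect P Q hP hQ =>
    convert RectUnion.rect (S := {K | PolClosure S K}) (PolClosure.marked b hK hP) hQ using 1
    ext p
    simp only [Set.mem_ofPred_eq, mem_marked]
    constructor
    · rintro ⟨r, x, hx, hp, hP, hQ⟩
      exact ⟨⟨x, hx, r, hP, hp⟩, hQ⟩
    · rintro ⟨⟨x, hx, r, hP, hp⟩, hQ⟩
      exact ⟨r, x, hx, hp, hP, hQ⟩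
  | union _ _ ih ih' =>
    convert RectUnion.union ih ih' using 1
    ext p
    simp only [Set.mem_union, Set.mem_ofPred_eq, and_or_left, exists_or]

theorem splittings_marked (K L : Language A) (a b : A) :
    splittings (K * {[b]} * L) a =
      {p | a = b ∧ p.1 ∈ K ∧ p.2 ∈ L} ∪
        ({p | ∃ r, ∃ y ∈ L, p.2 = r ++ b :: y ∧ (p.1, r) ∈ splittings K a} ∪
          {p | ∃ r, ∃ x ∈ K, p.1 = x ++ b :: r ∧ (r, p.2) ∈ splittings L a}) := by
  ext ⟨u, v⟩
  simp only [splittings, mem_marked, append_cons_eq_append_cons_iff, Set.mem_union,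
    Set.mem_ofPred_eq]
  constructor
  · rintro ⟨x, hx, y, hy, ⟨rfl, rfl, rfl⟩ | ⟨r, rfl, rfl⟩ | ⟨r, rfl, rfl⟩⟩
    · exact .inl ⟨rfl, hx, hy⟩
    · exact .inr (.inl ⟨r, y, hy, rfl, hx⟩)
    · exact .inr (.inr ⟨r, x, hx, rfl, hy⟩)
  · rintro (⟨rfl, hx, hy⟩ | ⟨r, y, hy, rfl, hx⟩ | ⟨r, x, hx, rfl, hy⟩)
    · exact ⟨u, hx, v, hy, .inl ⟨rfl, rfl, rfl⟩⟩
    · exact ⟨_, hx, y, hy, .inr (.inl ⟨r, rfl, rfl⟩)⟩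
    · exact ⟨x, hx, _, hy, .inr (.inr ⟨r, rfl, rfl⟩)⟩

theorem PolClosure.rectUnion_splittings {S : Set (Language A)}
    (hS : ∀ L ∈ S, ∀ a, RectUnion S (splittings L a)) {L : Language A} (h : PolClosure S L)
    (a : A) : RectUnion {K | PolClosure S K} (splittings L a) := by
  induction h with
  | base hL => exact (hS _ hL a).mono fun _ => .base
  | union _ _ ih ih' => exact .union ih ih'
  | @marked K L b hK hL ih ih' =>
    have hunion := (ih.image_append_right (b := b) hL).union (ih'.image_append_left (b := b) hK)
    rw [splittings_marked]
    by_cases hab : a = b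
    · simp only [hab, true_and]
      exact (RectUnion.rect hK hL).union (hab ▸ hunion)
    · simp only [hab, false_and, Set.ofPred_false, Set.empty_union]
      exact hunion

theorem PolClosure.marked_inf {S 𝒞 : Set (Language A)} {K L M : Language A} {a : A}
    (hK : ∀ P ∈ 𝒞, PolClosure S (K ⊓ P)) (hL : ∀ Q ∈ 𝒞, PolClosure S (L ⊓ Q))
    (hM : RectUnion 𝒞 (splittings M a)) : PolClosure S (K * {[a]} * L ⊓ M) := by
  let restrict (R : Set (List A × List A)) : Language A :=
    {w | ∃ u ∈ K, ∃ v ∈ L, (u, v) ∈ R ∧ w = u ++ a :: v}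
  have polClosure_restrict {R} (hR : RectUnion 𝒞 R) : PolClosure S (restrict R) := by
    induction hR with
    | @rect P Q hP hQ =>
      convert PolClosure.marked a (hK P hP) (hL Q hQ) using 2
      ext w
      simp only [mem_marked, Language.mem_inf]
      exact ⟨fun ⟨u, hu, v, hv, hR, hw⟩ => ⟨u, ⟨hu, hR.1⟩, v, ⟨hv, hR.2⟩, hw⟩,
        fun ⟨u, hu, v, hv, hw⟩ => ⟨u, hu.1, v, hv.1, ⟨hu.2, hv.2⟩, hw⟩⟩
    | @union R R' _ _ ih ih' =>
      convert PolClosure.union ih ih' using 2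
      exact Set.ext fun w => ⟨fun ⟨u, hu, v, hv, hR, hw⟩ =>
          hR.imp (⟨u, hu, v, hv, ·, hw⟩) (⟨u, hu, v, hv, ·, hw⟩),
        fun h => h.elim (fun ⟨u, hu, v, hv, hR, hw⟩ => ⟨u, hu, v, hv, .inl hR, hw⟩)
          fun ⟨u, hu, v, hv, hR, hw⟩ => ⟨u, hu, v, hv, .inr hR, hw⟩⟩
  have inf_eq_restrict : K * {[a]} * L ⊓ M = restrict (splittings M a) := by
    ext w
    rw [Language.mem_inf, mem_marked]
    constructor
    · rintro ⟨⟨u, hu, v, hv, rfl⟩, hw⟩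
      exact ⟨u, hu, v, hv, hw, rfl⟩
    · rintro ⟨u, hu, v, hv, hw, rfl⟩
      exact ⟨⟨u, hu, v, hv, rfl⟩, hw⟩
  exact inf_eq_restrict ▸ polClosure_restrict hM

theorem PolClosure.inf_base {S : Set (Language A)} (hinf : InfClosed S)
    (hS : ∀ L ∈ S, ∀ a, RectUnion S (splittings L a)) {K L : Language A} (hK : PolClosure S K)
    (hL : L ∈ S) : PolClosure S (K ⊓ L) := by
  induction hK generalizing L with
  | base hK => exact .base (hinf hK hL)
  | union _ _ ih ih' => exact inf_sup_right (α := Language A) _ _ _ ▸ .union (ih hL) (ih' hL)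
  | marked a _ _ ih ih' => exact .marked_inf (fun _ hP => ih hP) (fun _ hQ => ih' hQ) (hS L hL a)

theorem PolClosure.infClosed {S : Set (Language A)} (hinf : InfClosed S)
    (hS : ∀ L ∈ S, ∀ a, RectUnion S (splittings L a)) : InfClosed {L | PolClosure S L} := by
  intro K hK L hL
  induction hK generalizing L with
  | base hK => exact inf_comm L _ ▸ PolClosure.inf_base hinf hS hL hK
  | union _ _ ih ih' =>
    exact inf_sup_right (α := Language A) _ _ _ ▸ .union (ih hL) (ih' hL)
  | marked a _ _ ih ih' =>
    exact .marked_inf (fun _ hP => ih hP) (fun _ hQ => ih' hQ)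
      (PolClosure.rectUnion_splittings hS hL a)

theorem PolClosure.supClosed (S : Set (Language A)) : SupClosed {L | PolClosure S L} :=
  fun _ hK _ hL => .union hK hL

/-! ### A basis for level `3/2` -/

theorem mem_hlevel_succ_of_even {C : LangClass} {k : ℕ} (hk : Even k) {L : Language A} :
    L ∈ hlevel C (k + 1) A ↔ PolClosure (hlevel C k A) L :=
  Set.ext_iff.1 (if_pos (Nat.even_iff.1 hk)) L

theorem mem_hlevel_succ_of_odd {C : LangClass} {k : ℕ} (hk : Odd k) {L : Language A} :
    L ∈ hlevel C (k + 1) A ↔ BoolClosure (hlevel C k A) L :=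
  Set.ext_iff.1 (if_neg (by simp [Nat.odd_iff.1 hk])) L

/-- The words none of whose letters lies in `T`. -/
def avoid (T : Set A) : Language A := {w | ∀ a ∈ w, a ∉ T}

/-- The empty language and the languages `(A \ T)*` with `T` finite. They suffice to generate
level `3/2` of the Straubing–Thérien hierarchy as a polynomial closure. -/
def avoidBasis (A : Type) : Set (Language A) := {L | L = ⊥ ∨ ∃ T : Set A, T.Finite ∧ L = avoid T}

theorem avoid_union (T T' : Set A) : avoid (T ∪ T') = avoid T ⊓ avoid T' := by
  ext w
  rw [Language.mem_inf]
  change (∀ a ∈ w, ¬(a ∈ T ∨ a ∈ T')) ↔ (∀ a ∈ w, a ∉ T) ∧ ∀ a ∈ w, a ∉ T'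
  simp only [not_or, imp_and, forall_and]

theorem avoid_empty : avoid (∅ : Set A) = ⊤ :=
  Set.eq_univ_of_forall fun _ _ _ => Set.notMem_empty _

theorem avoid_singleton (a : A) : avoid {a} = (⊤ * {[a]} * ⊤)ᶜ := by
  ext w
  change (∀ b ∈ w, b ≠ a) ↔ ¬w ∈ (⊤ : Language A) * {[a]} * ⊤
  rw [mem_marked]
  constructor
  · rintro h ⟨u, -, v, -, rfl⟩
    exact h a (by simp) rfl
  · rintro h b hb rfl
    obtain ⟨u, v, rfl⟩ := List.append_of_mem hb
    exact h ⟨u, trivial, v, trivial, rfl⟩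

theorem infClosed_avoidBasis : InfClosed (avoidBasis A) := by
  rintro _ (rfl | ⟨T, hT, rfl⟩) _ (rfl | ⟨T', hT', rfl⟩)
  · exact .inl (inf_bot_eq _)
  · exact .inl (bot_inf_eq _)
  · exact .inl (inf_bot_eq _)
  · exact .inr ⟨T ∪ T', hT.union hT', (avoid_union T T').symm⟩

theorem splittings_avoid_of_mem {T : Set A} {a : A} (ha : a ∈ T) :
    splittings (avoid T) a = ∅ :=
  Set.eq_empty_of_forall_notMem fun _ hp => hp a (by simp) ha

theorem splittings_avoid_of_notMem {T : Set A} {a : A} (ha : a ∉ T) :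
    splittings (avoid T) a = {p | p.1 ∈ avoid T ∧ p.2 ∈ avoid T} := by
  ext ⟨u, v⟩
  change (∀ b ∈ u ++ a :: v, b ∉ T) ↔ (∀ b ∈ u, b ∉ T) ∧ ∀ b ∈ v, b ∉ T
  simp only [List.forall_mem_append, List.forall_mem_cons, ha, not_false_eq_true, true_and]

theorem rectUnion_splittings_of_mem_avoidBasis {L : Language A} (hL : L ∈ avoidBasis A) (a : A) :
    RectUnion (avoidBasis A) (splittings L a) := by
  have rectUnion_empty : RectUnion (avoidBasis A) ∅ := by
    convert RectUnion.rect (S := avoidBasis A) (.inl rfl) (.inl rfl)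
    exact (Set.eq_empty_of_forall_notMem fun _ hp => hp.1).symm
  rcases hL with rfl | ⟨T, hT, rfl⟩
  · exact rectUnion_empty
  · by_cases ha : a ∈ T
    · exact splittings_avoid_of_mem ha ▸ rectUnion_empty
    · exact splittings_avoid_of_notMem ha ▸ .rect (.inr ⟨T, hT, rfl⟩) (.inr ⟨T, hT, rfl⟩)

theorem infClosed_polClosure_avoidBasis : InfClosed {L | PolClosure (avoidBasis A) L} :=
  PolClosure.infClosed infClosed_avoidBasis fun _ => rectUnion_splittings_of_mem_avoidBasis

theorem bot_mem_hlevel_STbasis (k : ℕ) : (⊥ : Language A) ∈ hlevel STbasis k A := by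
  induction k with
  | zero => exact .inl rfl
  | succ k ih =>
    rcases k.even_or_odd with hk | hk
    · exact (mem_hlevel_succ_of_even hk).2 (.base ih)
    · exact (mem_hlevel_succ_of_odd hk).2 (.base ih)

theorem avoid_mem_hlevel_two {T : Set A} (hT : T.Finite) : avoid T ∈ hlevel STbasis 2 A := by
  rw [mem_hlevel_succ_of_odd odd_one]
  have top_mem : (⊤ : Language A) ∈ hlevel STbasis 0 A := .inr rfl
  have hlevel_one {L : Language A} : L ∈ hlevel STbasis 1 A ↔ PolClosure (hlevel STbasis 0 A) L :=
    mem_hlevel_succ_of_even (by decide)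
  induction T, hT using Set.Finite.induction_on with
  | empty => exact avoid_empty ▸ .base (hlevel_one.2 (.base top_mem))
  | @insert a T _ _ ih =>
    rw [Set.insert_eq, avoid_union, avoid_singleton]
    exact .inter (.compl (.base (hlevel_one.2 (.marked a (.base top_mem) (.base top_mem))))) ih

theorem mem_hlevel_three_of_polClosure_avoidBasis {L : Language A}
    (hL : PolClosure (avoidBasis A) L) : L ∈ hlevel STbasis 3 A := by
  refine (mem_hlevel_succ_of_even even_two).2 (hL.mono ?_)
  rintro _ (rfl | ⟨T, hT, rfl⟩)
  · exact bot_mem_hlevel_STbasis 2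
  · exact avoid_mem_hlevel_two hT

/-! ### The preorders -/

section MarkedLE

variable {α β : Type*}

/-- The preorder `u ≤_{T,n} v` on words. At rank `0`, every letter of `T` in `v` occurs in `u`; at
rank `n + 1`, moreover every factorization of `u` around a letter of `T` is matched by one of `v`
around the same letter, with factors compared at rank `n`. -/
def MarkedLE (T : Set α) : ℕ → List α → List α → Prop
  | 0, u, v => ∀ a ∈ T, a ∈ v → a ∈ u
  | n + 1, u, v => MarkedLE T n u v ∧ ∀ s t, ∀ a ∈ T, u = s ++ a :: t →
      ∃ s' t', v = s' ++ a :: t' ∧ MarkedLE T n s s' ∧ MarkedLE T n t t'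

namespace MarkedLE

variable {T : Set α} {n : ℕ}

theorem refl (T : Set α) (n : ℕ) (u : List α) : MarkedLE T n u u := by
  induction n generalizing u with
  | zero => exact fun _ _ => id
  | succ n ih => exact ⟨ih u, fun s t a _ hu => ⟨s, t, hu, ih s, ih t⟩⟩

theorem mono_set {T' : Set α} (hT : T ⊆ T') {u v : List α} (h : MarkedLE T' n u v) :
    MarkedLE T n u v := by
  induction n generalizing u v with
  | zero => exact fun a ha => h a (hT ha)
  | succ n ih =>
    refine ⟨ih h.1, fun s t a ha hu => ?_⟩
    obtain ⟨s', t', hv, hs, ht⟩ := h.2 s t a (hT ha) hu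
    exact ⟨s', t', hv, ih hs, ih ht⟩

theorem mono_rank {m : ℕ} (hmn : m ≤ n) {u v : List α} (h : MarkedLE T n u v) :
    MarkedLE T m u v := by
  induction hmn with
  | refl => exact h
  | step _ ih => exact ih h.1

theorem mono {T' : Set α} {m : ℕ} (hT : T ⊆ T') (hmn : m ≤ n) {u v : List α}
    (h : MarkedLE T' n u v) : MarkedLE T m u v :=
  (h.mono_set hT).mono_rank hmn

theorem mem_of_mem {u v : List α} (h : MarkedLE T n u v) {a : α} (ha : a ∈ T) (hv : a ∈ v) :
    a ∈ u :=
  h.mono_rank n.zero_le a ha hv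

theorem append {u u' v v' : List α} (hu : MarkedLE T n u u') (hv : MarkedLE T n v v') :
    MarkedLE T n (u ++ v) (u' ++ v') := by
  induction n generalizing u u' v v' with
  | zero => exact fun a ha h => List.mem_append.2 ((List.mem_append.1 h).imp (hu a ha) (hv a ha))
  | succ n ih =>
    refine ⟨ih hu.1 hv.1, fun s t a ha h => ?_⟩
    rcases append_eq_append_cons_iff_s15.1 h with ⟨r, rfl, rfl⟩ | ⟨r, rfl, rfl⟩
    · obtain ⟨s', r', rfl, hs, hr⟩ := hu.2 s r a ha rfl
      exact ⟨s', r' ++ v', by simp, hs, ih hr hv.1⟩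
    · obtain ⟨r', t', rfl, hr, ht⟩ := hv.2 r t a ha rfl
      exact ⟨u' ++ r', t', by simp, ih hu.1 hr, ht⟩

theorem map_iff {f : α → β} (hf : f.Injective) {T : Set β} {u v : List α} :
    MarkedLE T n (u.map f) (v.map f) ↔ MarkedLE (f ⁻¹' T) n u v := by
  induction n generalizing u v with
  | zero =>
    constructor
    · exact fun h a ha hv =>
        (List.mem_map_of_injective hf).1 (h (f a) ha (List.mem_map_of_mem hv))
    · intro h b hb hv
      obtain ⟨a, ha, rfl⟩ := List.mem_map.1 hv
      exact List.mem_map_of_mem (h a hb ha)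
  | succ n ih =>
    refine and_congr ih ⟨fun h s t a ha hu => ?_, fun h s t b hb hu => ?_⟩
    · obtain ⟨s', t', hv, hs, ht⟩ := h (s.map f) (t.map f) (f a) ha (by simp [hu])
      obtain ⟨s', _, rfl, rfl, hv'⟩ := List.map_eq_append_iff.1 hv
      obtain ⟨a', t', rfl, haa', rfl⟩ := List.map_eq_cons_iff.1 hv'
      exact ⟨s', t', by rw [hf haa'], ih.1 hs, ih.1 ht⟩
    · obtain ⟨s, _, rfl, rfl, hu'⟩ := List.map_eq_append_iff.1 hu
      obtain ⟨a, t, rfl, rfl, rfl⟩ := List.map_eq_cons_iff.1 hu'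
      obtain ⟨s', t', rfl, hs, ht⟩ := h s t a hb rfl
      exact ⟨s'.map f, t'.map f, by simp, ih.2 hs, ih.2 ht⟩

theorem sublist_iff {u v w : List α} (h : MarkedLE T n u v) (hw : w.length ≤ n)
    (hT : ∀ a ∈ w, a ∈ T) : w.Sublist u ↔ w.Sublist v := by
  induction w generalizing n u v with
  | nil => simp only [List.nil_sublist]
  | cons a w ih =>
    obtain ⟨ha, hT⟩ := List.forall_mem_cons.1 hT
    by_cases hau : a ∈ u
    · obtain ⟨n, rfl⟩ := Nat.exists_eq_add_of_le' (Nat.le_of_add_left_le hw)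
      obtain ⟨s, t, rfl, has⟩ := List.eq_append_cons_of_mem hau
      obtain ⟨s', t', rfl, hs, ht⟩ := h.2 s t a ha rfl
      have has' : a ∉ s' := fun h => has (hs.mem_of_mem ha h)
      rw [cons_sublist_append_cons_iff has, cons_sublist_append_cons_iff has']
      exact ih ht (Nat.le_of_succ_le_succ hw) hT
    · have hav : a ∉ v := fun hv => hau (h.mem_of_mem ha hv)
      exact iff_of_false (fun h => hau (h.subset List.mem_cons_self))
        fun h => hav (h.subset List.mem_cons_self)

/-- Among the `N ≥ 2 ^ (n + 1)` factors `x` of `x ^ N`, the one containing a marked letter has at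
least `2 ^ n` others on one of its sides: the induction inserts `y` on that side. -/
theorem wordPow_append_wordPow {x : List α} (hx : ∀ a ∈ T, a ∈ x) {N : ℕ} (hN : 2 ^ n ≤ N)
    (y : List α) : MarkedLE T n (wordPow x N) (wordPow x N ++ (y ++ wordPow x N)) := by
  induction n generalizing N y with
  | zero => exact fun a ha _ => mem_wordPow.2 ⟨by omega, hx a ha⟩
  | succ n ih =>
    refine ⟨ih ((Nat.pow_le_pow_right two_pos n.le_succ).trans hN) y, fun s t a _ hs => ?_⟩
    obtain ⟨i, j, s', t', rfl, -, rfl, rfl⟩ := exists_of_wordPow_eq_append_cons hs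
    have hij : 2 ^ n ≤ i ∨ 2 ^ n ≤ j := by rw [pow_succ] at hN; omega
    rcases hij with hi | hj
    · refine ⟨wordPow x (i + 1 + j) ++ (y ++ (wordPow x i ++ s')), _, ?_, ?_, .refl T n _⟩
      · simp [hs]
      · simpa only [add_assoc, wordPow_add x i, List.append_assoc] using
          (ih hi (wordPow x (1 + j) ++ y)).append (.refl T n s')
    · refine ⟨_, t' ++ (wordPow x j ++ (y ++ wordPow x (i + 1 + j))), ?_, .refl T n _, ?_⟩
      · simp [hs]
      · simpa only [wordPow_add x (i + 1), List.append_assoc] using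
          (MarkedLE.refl T n t').append (ih hj (y ++ wordPow x (i + 1)))

end MarkedLE

theorem exists_finite_rank_and {P Q : Set α → ℕ → Prop}
    (hP : ∀ ⦃T T'⦄, T ⊆ T' → ∀ ⦃n n'⦄, n ≤ n' → P T n → P T' n')
    (hQ : ∀ ⦃T T'⦄, T ⊆ T' → ∀ ⦃n n'⦄, n ≤ n' → Q T n → Q T' n')
    (h : ∃ T, T.Finite ∧ ∃ n, P T n) (h' : ∃ T, T.Finite ∧ ∃ n, Q T n) :
    ∃ T, T.Finite ∧ ∃ n, P T n ∧ Q T n := by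
  obtain ⟨⟨T, hT, n, h⟩, T', hT', n', h'⟩ := And.intro h h'
  exact ⟨T ∪ T', hT.union hT', max n n', hP Set.subset_union_left (le_max_left n n') h,
    hQ Set.subset_union_right (le_max_right n n') h'⟩

end MarkedLE

/-! ### Level `3/2` consists of the upper sets -/

/-- `L` is an upper set of the preorder `≤_{T,n}`. -/
def IsMarkedUpset (T : Set A) (n : ℕ) (L : Language A) : Prop :=
  ∀ u v, MarkedLE T n u v → u ∈ L → v ∈ L

namespace IsMarkedUpset

variable {T T' : Set A} {n n' : ℕ} {K L : Language A}

theorem mono (hT : T ⊆ T') (hn : n ≤ n') (h : IsMarkedUpset T n L) : IsMarkedUpset T' n' L :=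
  fun u v huv => h u v (huv.mono hT hn)

theorem sup (hK : IsMarkedUpset T n K) (hL : IsMarkedUpset T n L) : IsMarkedUpset T n (K ⊔ L) :=
  fun u v huv => Or.imp (hK u v huv) (hL u v huv)

theorem marked {a : A} (ha : a ∈ T) (hK : IsMarkedUpset T n K) (hL : IsMarkedUpset T n L) :
    IsMarkedUpset T (n + 1) (K * {[a]} * L) := by
  intro u v huv hu
  obtain ⟨s, hs, t, ht, rfl⟩ := mem_marked.1 hu
  obtain ⟨s', t', rfl, hss', htt'⟩ := huv.2 s t a ha rfl
  exact mem_marked.2 ⟨s', hK s s' hss' hs, t', hL t t' htt' ht, rfl⟩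

end IsMarkedUpset

theorem exists_finite_mem_iff_sublist_of_mem_hlevel_one {L : Language A}
    (hL : L ∈ hlevel STbasis 1 A) :
    ∃ F : Set (List A), F.Finite ∧ ∀ w, w ∈ L ↔ ∃ u ∈ F, u.Sublist w := by
  rw [mem_hlevel_succ_of_even Even.zero] at hL
  induction hL with
  | base hL =>
    rcases hL with rfl | rfl
    · exact ⟨∅, Set.finite_empty, fun w => iff_of_false id (by simp)⟩
    · exact ⟨{[]}, Set.finite_singleton _, fun w => iff_of_true trivial (by simp)⟩
  | union _ _ ih ih' =>
    obtain ⟨⟨F, hF, h⟩, F', hF', h'⟩ := And.intro ih ih'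
    refine ⟨F ∪ F', hF.union hF', fun w => (or_congr (h w) (h' w)).trans ?_⟩
    simp only [Set.mem_union, or_and_right, exists_or]
  | marked a _ _ ih ih' =>
    obtain ⟨⟨F, hF, h⟩, F', hF', h'⟩ := And.intro ih ih'
    refine ⟨Set.image2 (fun u v => u ++ a :: v) F F', hF.image2 _ hF', fun w => ?_⟩
    simp only [mem_marked, h, h', Set.exists_mem_image2]
    constructor
    · rintro ⟨s, ⟨u, hu, hus⟩, t, ⟨v, hv, hvt⟩, rfl⟩
      exact ⟨u, hu, v, hv, hus.append (hvt.cons_cons a)⟩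
    · rintro ⟨u, hu, v, hv, huv⟩
      obtain ⟨s, r, rfl, hus, hvr⟩ := List.append_sublist_iff.1 huv
      obtain ⟨x, t, rfl, hax, hvt⟩ := List.cons_sublist_iff.1 hvr
      obtain ⟨x, y, rfl⟩ := List.append_of_mem hax
      exact ⟨s ++ x, ⟨u, hu, hus.trans (List.sublist_append_left _ _)⟩, y ++ t,
        ⟨v, hv, hvt.trans (List.sublist_append_right _ _)⟩, by simp⟩

theorem exists_markedLE_mem_iff_of_mem_hlevel_one {L : Language A} (hL : L ∈ hlevel STbasis 1 A) :
    ∃ T : Set A, T.Finite ∧ ∃ n, ∀ u v, MarkedLE T n u v → (u ∈ L ↔ v ∈ L) := by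
  obtain ⟨F, hF, hFL⟩ := exists_finite_mem_iff_sublist_of_mem_hlevel_one hL
  obtain ⟨n, hn⟩ := (hF.image List.length).bddAbove
  refine ⟨⋃ w ∈ F, {a | a ∈ w}, hF.biUnion fun w _ => w.finite_toSet, n, fun u v huv => ?_⟩
  rw [hFL, hFL]
  exact exists_congr fun w => and_congr_right fun hw =>
    huv.sublist_iff (hn (Set.mem_image_of_mem _ hw)) fun a ha => Set.mem_biUnion hw ha

theorem exists_markedLE_mem_iff_of_mem_hlevel_two {L : Language A} (hL : L ∈ hlevel STbasis 2 A) :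
    ∃ T : Set A, T.Finite ∧ ∃ n, ∀ u v, MarkedLE T n u v → (u ∈ L ↔ v ∈ L) := by
  have mono (K : Language A) ⦃T T' : Set A⦄ (hT : T ⊆ T') ⦃n n' : ℕ⦄ (hn : n ≤ n')
      (h : ∀ u v, MarkedLE T n u v → (u ∈ K ↔ v ∈ K)) (u v) (huv : MarkedLE T' n' u v) :
      u ∈ K ↔ v ∈ K :=
    h u v (huv.mono hT hn)
  rw [mem_hlevel_succ_of_odd odd_one] at hL
  induction hL with
  | base hL => exact exists_markedLE_mem_iff_of_mem_hlevel_one hL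
  | compl _ ih =>
    obtain ⟨T, hT, n, h⟩ := ih
    exact ⟨T, hT, n, fun u v huv => not_congr (h u v huv)⟩
  | union _ _ ih ih' =>
    obtain ⟨T, hT, n, h, h'⟩ := exists_finite_rank_and (mono _) (mono _) ih ih'
    exact ⟨T, hT, n, fun u v huv => or_congr (h u v huv) (h' u v huv)⟩
  | inter _ _ ih ih' =>
    obtain ⟨T, hT, n, h, h'⟩ := exists_finite_rank_and (mono _) (mono _) ih ih'
    exact ⟨T, hT, n, fun u v huv => and_congr (h u v huv) (h' u v huv)⟩

theorem exists_isMarkedUpset_of_mem_hlevel_three {L : Language A}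
    (hL : L ∈ hlevel STbasis 3 A) : ∃ T : Set A, T.Finite ∧ ∃ n, IsMarkedUpset T n L := by
  have mono (K : Language A) ⦃T T' : Set A⦄ (hT : T ⊆ T') ⦃n n' : ℕ⦄ (hn : n ≤ n') :
      IsMarkedUpset T n K → IsMarkedUpset T' n' K :=
    .mono hT hn
  rw [mem_hlevel_succ_of_even even_two] at hL
  induction hL with
  | base hL =>
    obtain ⟨T, hT, n, h⟩ := exists_markedLE_mem_iff_of_mem_hlevel_two hL
    exact ⟨T, hT, n, fun u v huv => (h u v huv).1⟩
  | union _ _ ih ih' =>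
    obtain ⟨T, hT, n, h, h'⟩ := exists_finite_rank_and (mono _) (mono _) ih ih'
    exact ⟨T, hT, n, h.sup h'⟩
  | marked a _ _ ih ih' =>
    obtain ⟨T, hT, n, h, h'⟩ := exists_finite_rank_and (mono _) (mono _) ih ih'
    exact ⟨insert a T, hT.insert a, n + 1, .marked (Set.mem_insert a T)
      (h.mono (Set.subset_insert a T) le_rfl) (h'.mono (Set.subset_insert a T) le_rfl)⟩

/-- The words above `u` for the preorder `≤_{T,n}`. -/
def markedUpper (T : Set A) (n : ℕ) (u : List A) : Language A := {v | MarkedLE T n u v}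

theorem markedUpper_zero (T : Set A) (u : List A) :
    markedUpper T 0 u = avoid (T \ {a | a ∈ u}) := by
  ext v
  change (∀ a ∈ T, a ∈ v → a ∈ u) ↔ ∀ a ∈ v, ¬(a ∈ T ∧ a ∉ u)
  simp only [not_and, not_not]
  exact forall_congr' fun a => forall_comm

/-- The languages whose intersection is `markedUpper T (n + 1) u`. -/
def markedUpperFactors (T : Set A) (n : ℕ) (u : List A) : Set (Language A) :=
  insert (markedUpper T n u)
    {M | ∃ s t, ∃ a ∈ T, u = s ++ a :: t ∧ M = markedUpper T n s * {[a]} * markedUpper T n t}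

theorem markedUpper_succ (T : Set A) (n : ℕ) (u : List A) :
    markedUpper T (n + 1) u = sInf (markedUpperFactors T n u) := by
  ext v
  rw [markedUpperFactors, sInf_insert, Language.mem_inf]
  refine and_congr_right fun _ => ⟨?_, fun h s t a ha hu => ?_⟩
  · rintro h _ ⟨s, t, a, ha, hu, rfl⟩
    obtain ⟨s', t', hv, hs, ht⟩ := h s t a ha hu
    exact mem_marked.2 ⟨s', hs, t', ht, hv⟩
  · obtain ⟨s', hs, t', ht, hv⟩ := mem_marked.1 (h _ ⟨s, t, a, ha, hu, rfl⟩)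
    exact ⟨s', t', hv, hs, ht⟩

theorem finite_iUnion_markedUpperFactors {T : Set A} (hT : T.Finite) {n : ℕ}
    (hn : (Set.range (markedUpper T n)).Finite) : (⋃ u, markedUpperFactors T n u).Finite := by
  refine (hn.union (hT.image2 (fun a p => p.1 * {[a]} * p.2) (hn.prod hn))).subset ?_
  refine Set.iUnion_subset fun u => Set.insert_subset (.inl ⟨u, rfl⟩) ?_
  rintro _ ⟨s, t, a, ha, -, rfl⟩
  exact .inr ⟨a, ha, (_, _), ⟨⟨s, rfl⟩, t, rfl⟩, rfl⟩

theorem finite_range_markedUpper {T : Set A} (hT : T.Finite) (n : ℕ) :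
    (Set.range (markedUpper T n)).Finite := by
  induction n with
  | zero =>
    refine (hT.finite_subsets.image avoid).subset ?_
    rintro _ ⟨u, rfl⟩
    exact ⟨_, Set.sdiff_subset, (markedUpper_zero T u).symm⟩
  | succ n ih =>
    refine ((finite_iUnion_markedUpperFactors hT ih).finite_subsets.image sInf).subset ?_
    rintro _ ⟨u, rfl⟩
    exact ⟨_, Set.subset_iUnion _ u, (markedUpper_succ T n u).symm⟩

theorem polClosure_markedUpper {T : Set A} (hT : T.Finite) (n : ℕ) (u : List A) :
    PolClosure (avoidBasis A) (markedUpper T n u) := by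
  induction n generalizing u with
  | zero => exact markedUpper_zero T u ▸ .base (.inr ⟨_, hT.sdiff, rfl⟩)
  | succ n ih =>
    have finite_factors : (markedUpperFactors T n u).Finite :=
      (finite_iUnion_markedUpperFactors hT (finite_range_markedUpper hT n)).subset
        (Set.subset_iUnion _ u)
    rw [markedUpper_succ]
    refine infClosed_polClosure_avoidBasis.sInf_mem_of_nonempty finite_factors
      (Set.insert_nonempty _ _) (Set.insert_subset (ih u) ?_)
    rintro _ ⟨s, t, a, -, -, rfl⟩
    exact .marked a (ih s) (ih t)

theorem IsMarkedUpset.eq_sSup {T : Set A} {n : ℕ} {L : Language A} (h : IsMarkedUpset T n L) :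
    L = sSup (markedUpper T n '' L) := by
  refine le_antisymm (fun u hu => ?_) (sSup_le ?_)
  · exact ⟨_, ⟨u, hu, rfl⟩, MarkedLE.refl T n u⟩
  · rintro _ ⟨u, hu, rfl⟩ v huv
    exact h u v huv hu

theorem sSup_image_markedUpper_mem_hlevel_three {T : Set A} (hT : T.Finite) (n : ℕ)
    (H : Set (List A)) : sSup (markedUpper T n '' H) ∈ hlevel STbasis 3 A := by
  apply mem_hlevel_three_of_polClosure_avoidBasis
  refine (PolClosure.supClosed _).sSup_mem
    ((finite_range_markedUpper hT n).subset (Set.image_subset_range _ _)) (.base (.inl rfl)) ?_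
  rintro _ ⟨u, -, rfl⟩
  exact polClosure_markedUpper hT n u

theorem mem_hlevel_three_iff {L : Language A} :
    L ∈ hlevel STbasis 3 A ↔ ∃ T : Set A, T.Finite ∧ ∃ n, IsMarkedUpset T n L :=
  ⟨exists_isMarkedUpset_of_mem_hlevel_three, fun ⟨_, hT, n, h⟩ =>
    h.eq_sSup ▸ sSup_image_markedUpper_mem_hlevel_three hT n L⟩

theorem exists_markedLE_of_not_separable {H H' : Language A}
    (h : ¬Separable (hlevel STbasis 3 A) H H') {T : Set A} (hT : T.Finite) (n : ℕ) :
    ∃ u ∈ H, ∃ v ∈ H', MarkedLE T n u v := by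
  contrapose! h
  refine ⟨_, sSup_image_markedUpper_mem_hlevel_three hT n H, fun u hu => ?_, ?_⟩
  · exact ⟨_, ⟨u, hu, rfl⟩, MarkedLE.refl T n u⟩
  · refine Set.eq_empty_of_forall_notMem ?_
    rintro v ⟨hv, _, ⟨u, hu, rfl⟩, huv⟩
    exact h u hu v hv huv

/-! ### From a separator of `H` and `H'` to a separator of `L` and `L'` -/

theorem image_map_mem_hlevel_three {A' : Type} {f : A → A'} (hf : f.Injective)
    (hf' : (Set.range f)ᶜ.Finite) {K : Language A} (hK : K ∈ hlevel STbasis 3 A) :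
    (List.map f '' K : Set (List A')) ∈ hlevel STbasis 3 A' := by
  obtain ⟨T, hT, n, h⟩ := mem_hlevel_three_iff.1 hK
  refine mem_hlevel_three_iff.2 ⟨f '' T ∪ (Set.range f)ᶜ, (hT.image f).union hf', n, ?_⟩
  rintro _ v huv ⟨u, hu, rfl⟩
  have range_of_mem_v : ∀ b ∈ v, b ∈ Set.range f := by
    intro b hb
    by_contra hbf
    obtain ⟨a, -, rfl⟩ := List.mem_map.1 (huv.mem_of_mem (.inr hbf) hb)
    exact hbf ⟨a, rfl⟩
  obtain ⟨v, rfl⟩ : v ∈ Set.range (List.map f) := by rwa [Set.range_list_map]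
  rw [MarkedLE.map_iff hf] at huv
  exact ⟨v, h u v (huv.mono_set fun a ha => .inl ⟨a, ha, rfl⟩) hu, rfl⟩

theorem embA_mem_hlevel_three {K : Language A} (hK : K ∈ hlevel STbasis 3 A) :
    embA K ∈ hlevel STbasis 3 (A ⊕ Bool) := by
  have embA_eq_image : embA K = List.map Sum.inl '' K :=
    Set.ext fun w => exists_congr fun v => and_congr_right fun _ => eq_comm
  rw [embA_eq_image]
  refine image_map_mem_hlevel_three Sum.inl_injective ?_ hK
  rw [Set.compl_range_inl]
  exact Set.finite_range _

/-- The words ending with `#` in which every factor in `A*` between two consecutive `#` belongs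
to `H'`. -/
def hashFactors (H' : Language A) : Language (A ⊕ Bool) :=
  {w | (∃ u, w = u ++ [.inr false]) ∧
    ∀ u k v, w = u ++ .inr false :: (k.map .inl ++ .inr false :: v) → k ∈ H'}

theorem hash_notMem_map_inl (k : List A) :
    (.inr false : A ⊕ Bool) ∉ k.map Sum.inl := by
  simp only [List.mem_map, reduceCtorEq, and_false, exists_false, not_false_eq_true]

theorem append_append_hash_mem_hashFactors {H' : Language A} {w x : List (A ⊕ Bool)}
    (hw : w ∈ hashFactors H') (hx : .inr false ∉ x) (hxH' : ∀ k, x = k.map .inl → k ∈ H') :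
    w ++ (x ++ [.inr false]) ∈ hashFactors H' := by
  refine ⟨⟨w ++ x, by simp⟩, fun u k v h => ?_⟩
  rcases append_eq_append_cons_iff_s15.1 h with ⟨r, rfl, hr⟩ | ⟨r, rfl, hr⟩
  · rcases append_eq_append_cons_iff_s15.1 hr.symm with ⟨r, rfl, rfl⟩ | ⟨y, hk, hy⟩
    · exact hw.2 u k r rfl
    · have hash_notMem_r : .inr false ∉ r := fun hr =>
        hash_notMem_map_inl k (hk ▸ List.mem_append_left y hr)
      have r_eq_nil : r = [] := by
        obtain ⟨z, hz⟩ := hw.1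
        rcases append_eq_append_cons_iff_s15.1 hz.symm with ⟨s, -, rfl⟩ | ⟨s, -, hs⟩
        · simp at hash_notMem_r
        · cases s with
          | nil => exact (List.cons.inj hs).2.symm
          | cons => simp at hs
      obtain ⟨rfl, -⟩ := (List.append_cons_inj_of_notMem hx List.not_mem_nil).1 hy
      exact hxH' k (by rw [hk, r_eq_nil, List.nil_append])
  · simpa using ((List.append_cons_inj_of_notMem hx List.not_mem_nil).1 hr).2.2

theorem langL'_le_hashFactors (H' : Language A) : LangL' H' ≤ hashFactors H' := by
  have hash_le : hashL ≤ hashFactors H' := by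
    rintro _ rfl
    refine ⟨⟨[], rfl⟩, fun u k v h => ?_⟩
    exact absurd (congrArg List.length h) (by simp; omega)
  have mul_embA_hash_le : hashFactors H' * (embA H' * hashL) ≤ hashFactors H' := by
    rintro _ ⟨w, hw, _, ⟨_, ⟨k, hk, rfl⟩, _, rfl, rfl⟩, rfl⟩
    refine append_append_hash_mem_hashFactors hw (hash_notMem_map_inl k) fun k' h => ?_
    rwa [← List.map_injective_iff.2 Sum.inl_injective h]
  have mul_dollar_hash_le : hashFactors H' * (AstarL * dollarL * hashL) ≤ hashFactors H' := by
    rintro _ ⟨w, hw, _, ⟨_, ⟨x, hx, _, rfl, rfl⟩, _, rfl, rfl⟩, rfl⟩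
    refine append_append_hash_mem_hashFactors hw ?_ fun k h => ?_
    · simpa using fun h => by simpa using hx _ h
    · have dollar_mem : Sum.inr true ∈ k.map Sum.inl := h ▸ by simp
      simp at dollar_mem
  refine mul_kstar_le hash_le ?_
  rw [← mul_assoc]
  exact mul_kstar_le mul_embA_hash_le mul_dollar_hash_le

theorem langL_le_marked {H H' K : Language A} (hK : H ≤ K) :
    LangL H H' ≤ ⊤ * {[.inr false]} * embA K * {[.inr false]} * ⊤ := by
  have embA_le : embA H ≤ embA K := fun _ ⟨v, hv, hw⟩ => ⟨v, hK hv, hw⟩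
  have langL'_le : LangL' H' ≤ ⊤ * {[.inr false]} := by
    intro w hw
    obtain ⟨u, rfl⟩ := (langL'_le_hashFactors H' hw).1
    exact Language.append_mem_mul trivial rfl
  exact mul_le_mul' (mul_le_mul' (mul_le_mul' langL'_le embA_le) le_rfl) le_top

theorem langL'_inf_marked {H' K : Language A} (hK : H' ⊓ K = ⊥) :
    LangL' H' ⊓ (⊤ * {[.inr false]} * embA K * {[.inr false]} * ⊤) = ⊥ := by
  refine Set.eq_empty_of_forall_notMem ?_
  rintro w ⟨hw, hwK⟩
  obtain ⟨s, hs, v, -, rfl⟩ := mem_marked.1 hwK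
  obtain ⟨u, -, _, ⟨k, hk, rfl⟩, rfl⟩ := mem_marked.1 hs
  have k_mem : k ∈ H' := (langL'_le_hashFactors H' hw).2 u k v (by simp)
  exact Set.eq_empty_iff_forall_notMem.1 hK k ⟨k_mem, hk⟩

theorem separable_langL_of_separable {H H' : Language A}
    (h : Separable (hlevel STbasis 3 A) H H') :
    Separable (hlevel STbasis 4 (A ⊕ Bool)) (LangL H H') (LangL' H') := by
  obtain ⟨K, hK, hHK, hKH'⟩ := h
  refine ⟨_, ?_, langL_le_marked hHK, langL'_inf_marked hKH'⟩
  have top_mem : PolClosure (hlevel STbasis 2 (A ⊕ Bool)) ⊤ :=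
    .base (avoid_empty ▸ avoid_mem_hlevel_two Set.finite_empty)
  have embA_mem := (mem_hlevel_succ_of_even even_two).1 (embA_mem_hlevel_three hK)
  refine (mem_hlevel_succ_of_odd (by decide)).2 (.base ((mem_hlevel_succ_of_even even_two).2 ?_))
  exact .marked _ (.marked _ top_mem embA_mem) top_mem

/-! ### Chains of words -/

/-- `v_0 ≤ u_0 ≤ v_1 ≤ u_1 ≤ ⋯` for the preorder `≤_{T,n}`. -/
def IsMarkedChain (T : Set A) (n : ℕ) (v u : ℕ → List A) : Prop :=
  ∀ i, MarkedLE T n (v i) (u i) ∧ MarkedLE T n (u i) (v (i + 1))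

theorem IsMarkedChain.mono {T T' : Set A} {n n' : ℕ} (hT : T ⊆ T') (hn : n ≤ n')
    {v u : ℕ → List A} (h : IsMarkedChain T' n' v u) : IsMarkedChain T n v u :=
  fun i => ⟨(h i).1.mono hT hn, (h i).2.mono hT hn⟩

theorem IsMarkedUpset.eventually_mem_iff {T : Set A} {n : ℕ} {L : Language A} {v u : ℕ → List A}
    (hL : IsMarkedUpset T n L) (h : IsMarkedChain T n v u) :
    ∀ᶠ i in Filter.atTop, (v i ∈ L ↔ u i ∈ L) := by
  by_cases hu : ∃ i, u i ∈ L
  · obtain ⟨i, hi⟩ := hu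
    refine Filter.eventually_atTop.2 ⟨i + 1, fun j hj => ?_⟩
    have v_mem : v j ∈ L := by
      induction j, hj using Nat.le_induction with
      | base => exact hL _ _ (h i).2 hi
      | succ j _ ih => exact hL _ _ (h j).2 (hL _ _ (h j).1 ih)
    exact iff_of_true v_mem (hL _ _ (h j).1 v_mem)
  · rw [not_exists] at hu
    exact .of_forall fun i => iff_of_false (fun hv => hu i (hL _ _ (h i).1 hv)) (hu i)

theorem exists_eventually_mem_iff_of_mem_hlevel_four {L : Language A}
    (hL : L ∈ hlevel STbasis 4 A) :
    ∃ T : Set A, T.Finite ∧ ∃ n, ∀ v u : ℕ → List A, IsMarkedChain T n v u →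
      ∀ᶠ i in Filter.atTop, (v i ∈ L ↔ u i ∈ L) := by
  have mono (K : Language A) ⦃T T' : Set A⦄ (hT : T ⊆ T') ⦃n n' : ℕ⦄ (hn : n ≤ n')
      (h : ∀ v u : ℕ → List A, IsMarkedChain T n v u →
        ∀ᶠ i in Filter.atTop, (v i ∈ K ↔ u i ∈ K))
      (v u : ℕ → List A) (hvu : IsMarkedChain T' n' v u) :
      ∀ᶠ i in Filter.atTop, (v i ∈ K ↔ u i ∈ K) :=
    h v u (hvu.mono hT hn)
  rw [mem_hlevel_succ_of_odd (by decide)] at hL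
  induction hL with
  | base hL =>
    obtain ⟨T, hT, n, h⟩ := exists_isMarkedUpset_of_mem_hlevel_three hL
    exact ⟨T, hT, n, fun v u => h.eventually_mem_iff⟩
  | compl _ ih =>
    obtain ⟨T, hT, n, h⟩ := ih
    exact ⟨T, hT, n, fun v u hvu => (h v u hvu).mono fun _ => not_congr⟩
  | union _ _ ih ih' =>
    obtain ⟨T, hT, n, h, h'⟩ := exists_finite_rank_and (mono _) (mono _) ih ih'
    exact ⟨T, hT, n, fun v u hvu => (h v u hvu).mp ((h' v u hvu).mono fun _ h h' => or_congr h' h)⟩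
  | inter _ _ ih ih' =>
    obtain ⟨T, hT, n, h, h'⟩ := exists_finite_rank_and (mono _) (mono _) ih ih'
    exact ⟨T, hT, n, fun v u hvu => (h v u hvu).mp ((h' v u hvu).mono fun _ h h' => and_congr h' h)⟩

theorem isMarkedChain_wordPow {T : Set A} {n : ℕ} {k h x p : List A} {a : A}
    (hx : ∀ a ∈ T, a ∈ x) (hhk : MarkedLE T n h k) :
    let z := a :: wordPow x (2 ^ n)
    IsMarkedChain T n (fun i => p ++ wordPow (k ++ z) (i + 1))
      (fun i => p ++ wordPow (k ++ z) (i + 1) ++ (h ++ z)) := by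
  intro z i
  constructor
  · have pumping := MarkedLE.wordPow_append_wordPow (n := n) hx le_rfl (h ++ [a])
    simpa [z, wordPow_succ] using
      (MarkedLE.refl T n (p ++ wordPow (k ++ z) i ++ k ++ [a])).append pumping
  · simpa only [wordPow_succ _ (i + 1), List.append_assoc] using
      (MarkedLE.refl T n (p ++ wordPow (k ++ z) (i + 1))).append (hhk.append (.refl T n z))

/-! ### From a separator of `L` and `L'` to a separator of `H` and `H'` -/

theorem exists_forall_mem_of_finite {T : Set (A ⊕ Bool)} (hT : T.Finite) :
    ∃ x ∈ (AstarL * dollarL * hashL : Language (A ⊕ Bool)), ∀ a ∈ T, a ∈ x := by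
  have finite_inl : (Sum.inl ⁻¹' T).Finite := hT.preimage Sum.inl_injective.injOn
  let letters := finite_inl.toFinset.toList.map (Sum.inl (β := Bool))
  refine ⟨letters ++ [.inr true] ++ [.inr false],
    ⟨_, ⟨letters, fun b hb => ?_, _, rfl, rfl⟩, _, rfl, rfl⟩, ?_⟩
  · obtain ⟨a, -, rfl⟩ := List.mem_map.1 hb
    exact ⟨a, rfl⟩
  · rintro (a | _ | _) ha
    · simpa [letters] using ha
    · simp
    · simp

theorem hash_cons_wordPow_mem_langL' {H' : Language A} {k : List A} {z : List (A ⊕ Bool)}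
    (hk : k ∈ H') (hz : z ∈ (innerL : Language (A ⊕ Bool))) (i : ℕ) :
    [.inr false] ++ wordPow (k.map .inl ++ .inr false :: z) i ∈ LangL' H' := by
  have block_mem : k.map .inl ++ .inr false :: z ∈ embA H' * hashL * innerL := by
    rw [List.append_cons]
    exact Language.append_mem_mul (Language.append_mem_mul ⟨k, hk, rfl⟩ rfl) hz
  exact Language.append_mem_mul rfl (wordPow_mem_kstar block_mem i)

theorem append_mem_langL {H H' : Language A} {h : List A} {w z : List (A ⊕ Bool)}
    (hw : w ∈ LangL' H') (hh : h ∈ H) (hz : z ∈ (innerL : Language (A ⊕ Bool))) :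
    w ++ (h.map .inl ++ .inr false :: z) ∈ LangL H H' := by
  rw [List.append_cons, ← List.append_assoc, ← List.append_assoc]
  exact Language.append_mem_mul
    (Language.append_mem_mul (Language.append_mem_mul hw ⟨h, hh, rfl⟩) rfl) hz

theorem separable_of_separable_langL {H H' : Language A}
    (hLL' : Separable (hlevel STbasis 4 (A ⊕ Bool)) (LangL H H') (LangL' H')) :
    Separable (hlevel STbasis 3 A) H H' := by
  by_contra hHH'
  obtain ⟨K, hK, hLK, hKL'⟩ := hLL'
  obtain ⟨T, hT, n, hTn⟩ := exists_eventually_mem_iff_of_mem_hlevel_four hK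
  obtain ⟨h, hh, k, hk, hhk⟩ := exists_markedLE_of_not_separable hHH'
    (hT.preimage Sum.inl_injective.injOn) n
  obtain ⟨x, hx, hTx⟩ := exists_forall_mem_of_finite hT
  have chain := isMarkedChain_wordPow (p := [.inr false]) (a := .inr false) hTx
    ((MarkedLE.map_iff Sum.inl_injective).2 hhk)
  obtain ⟨i, hi⟩ := (hTn _ _ chain).exists
  have hz : wordPow x (2 ^ n) ∈ (innerL : Language (A ⊕ Bool)) := wordPow_mem_kstar hx _
  have v_mem := hash_cons_wordPow_mem_langL' hk hz (i + 1)
  have u_mem := append_mem_langL v_mem hh hz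
  exact Set.eq_empty_iff_forall_notMem.1 hKL' _ ⟨v_mem, hi.2 (hLK u_mem)⟩

theorem statement15_general (H H' : Language A) :
    Separable (hlevel STbasis 3 A) H H' ↔
      Separable (hlevel STbasis 4 (A ⊕ Bool)) (LangL H H') (LangL' H') :=
  ⟨separable_langL_of_separable, separable_of_separable_langL⟩

/-- `H` is `ST[3/2]`-separable from `H'` if and only if `L` is `ST[2]`-separable
from `L'` (levels of the Straubing-Thérien hierarchy are indexed in half units:
`3` is level `3/2` and `4` is level `2`). -/
theorem statement15 [Fintype A] (H H' : Language A) :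
    Separable (hlevel STbasis 3 A) H H' ↔
      Separable (hlevel STbasis 4 (A ⊕ Bool)) (LangL H H') (LangL' H') :=
  statement15_general H H'

end Statement15
end
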